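/- Let Γ ⊂ ℂ be a quasismooth Jordan curve, let ν ∈ A∞(Γ), and let 1 ≤ p < ∞. Then there exist constants c₁, c₂ > 0 depending only on Γ, λ_ν and p such that for every n ∈ ℕ, every polynomial p_n ∈ ℙ_n, every Borel set E ⊂ Γ and every s with 0 < |E| ≤ s < (diam Γ)/12, one has ∫_Γ |p_n|^p dν ≤ c₁ exp(c₂ δ(s) n) ∫_{Γ∖E} |p_n|^p dν. -/

import Mathlib

open MeasureTheory Metric Set Filter Bornology Complex
open scoped ENNReal NNReal Topology

noncomputable section

/-- `Γ` is a Jordan curve: the image of an injective continuous map of the unit circle. -/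
def IsJordanCurve (Γ : Set ℂ) : Prop :=
  ∃ γ : ℂ → ℂ, ContinuousOn γ (Metric.sphere (0:ℂ) 1) ∧
    Set.InjOn γ (Metric.sphere (0:ℂ) 1) ∧ Γ = γ '' (Metric.sphere (0:ℂ) 1)

/-- A (closed) subarc of `Γ`: a closed connected subset. -/
def IsSubarc (Γ J : Set ℂ) : Prop :=
  J ⊆ Γ ∧ IsClosed J ∧ IsPreconnected J

/-- `|Γ(z₁,z₂)|`: the length (1-dimensional Hausdorff measure) of the shorter subarc of `Γ`
joining `z₁` and `z₂`, described as the infimum of lengths of closed connected subsets of `Γ`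
containing both points. -/
def shorterArcLength (Γ : Set ℂ) (z₁ z₂ : ℂ) : ℝ≥0∞ :=
  ⨅ (J : Set ℂ) (_ : IsSubarc Γ J ∧ z₁ ∈ J ∧ z₂ ∈ J), μH[1] J

/-- `J` is (a realization of) the shorter arc `Γ(z₁,z₂)` of `Γ` between `z₁` and `z₂`. -/
def IsShorterArc (Γ : Set ℂ) (z₁ z₂ : ℂ) (J : Set ℂ) : Prop :=
  IsSubarc Γ J ∧ z₁ ∈ J ∧ z₂ ∈ J ∧ μH[1] J = shorterArcLength Γ z₁ z₂

/-- `Γ` is quasismooth (in the sense of Lavrentiev) with constant `Λ ≥ 1`: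
`|Γ(z₁,z₂)| ≤ Λ |z₁ - z₂|`. -/
def IsQuasismooth (Γ : Set ℂ) (Λ : ℝ) : Prop :=
  1 ≤ Λ ∧ ∀ z₁ ∈ Γ, ∀ z₂ ∈ Γ,
    shorterArcLength Γ z₁ z₂ ≤ ENNReal.ofReal (Λ * dist z₁ z₂)

/-- The union of the unbounded connected components of `Γᶜ`; for a Jordan curve `Γ` this is
the (unique) unbounded component `Ω` of the complement of `Γ`. -/
def unboundedComponent (Γ : Set ℂ) : Set ℂ :=
  {z | z ∉ Γ ∧ ¬ Bornology.IsBounded (connectedComponentIn Γᶜ z)}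

/-- `d(A,B) := inf {|z-ζ| : z ∈ A, ζ ∈ B}`. -/
def setDist (A B : Set ℂ) : ℝ := sInf (Set.image2 dist A B)

/-- The exterior `𝔻*` of the closed unit disk (finite part). -/
def extDisk : Set ℂ := {w : ℂ | 1 < ‖w‖}

/-- `Φ` is the conformal (holomorphic bijective) map of `Ω` onto `𝔻* = {|w| > 1}` normalized
by `Φ(∞) = ∞` and `Φ'(∞) := lim_{z→∞} Φ(z)/z > 0`. -/
def IsExtConformal (Ω : Set ℂ) (Φ : ℂ → ℂ) : Prop :=
  DifferentiableOn ℂ Φ Ω ∧ Set.BijOn Φ Ω extDisk ∧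
    ∃ c : ℝ, 0 < c ∧
      Filter.Tendsto (fun z => Φ z / z) (Bornology.cobounded ℂ) (nhds (c : ℂ))

/-- `Φ` additionally extends to a homeomorphism of `closure Ω` onto `{|w| ≥ 1}`. -/
def IsExtConformalClosure (Ω : Set ℂ) (Φ : ℂ → ℂ) : Prop :=
  IsExtConformal Ω Φ ∧ ContinuousOn Φ (closure Ω) ∧
    Set.BijOn Φ (closure Ω) {w : ℂ | 1 ≤ ‖w‖}

/-- The level curve `Γ_δ := {ζ ∈ Ω : |Φ(ζ)| = 1 + δ}`. -/
def levelCurve (Ω : Set ℂ) (Φ : ℂ → ℂ) (δ : ℝ) : Set ℂ :=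
  {ζ ∈ Ω | ‖Φ ζ‖ = 1 + δ}

/-- `ρ_δ(z) := d({z}, Γ_δ)`. -/
def rho (Ω : Set ℂ) (Φ : ℂ → ℂ) (δ : ℝ) (z : ℂ) : ℝ :=
  Metric.infDist z (levelCurve Ω Φ δ)

/-- `ν ∈ A∞(Γ)` with constant `lam ≥ 1`: `ν(J) ≤ lam · ν(S)` for every subarc `J ⊂ Γ` and
every Borel set `S ⊂ J` with `|J| ≤ 2|S|`. -/
def IsAInftyMeasure (Γ : Set ℂ) (ν : MeasureTheory.Measure ℂ) (lam : ℝ) : Prop :=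
  1 ≤ lam ∧ ∀ J S : Set ℂ, IsSubarc Γ J → S ⊆ J → MeasurableSet S →
    μH[1] J ≤ 2 * μH[1] S → ν J ≤ ENNReal.ofReal lam * ν S

/-- Maximum principle for a function that is locally the norm of an analytic function. -/
theorem le_of_locally_norm_analytic {U : Set ℂ} (hU : IsOpen U) {h : ℂ → ℝ} {M : ℝ}
    (hloc : ∀ z ∈ U, ∃ F : ℂ → ℂ, AnalyticAt ℂ F z ∧ ∀ᶠ y in 𝓝 z, h y = ‖F y‖)
    (hfr : ∀ ζ ∈ frontier U, ∀ M' > M, ∀ᶠ z in 𝓝[U] ζ, h z < M')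
    (hinf : ∀ M' > M, ∀ᶠ z in cobounded ℂ, z ∈ U → h z < M') :
    ∀ z ∈ U, h z ≤ M := by
  intro z₀ hz₀
  by_contra! hlt
  have hcontAt : ∀ z ∈ U, ContinuousAt h z := by
    intro z hz
    obtain ⟨F, hF, he⟩ := hloc z hz
    have := hF.continuousAt.norm
    exact this.congr (he.mono fun y hy => hy.symm)
  set K : Set ℂ := {z | z ∈ U ∧ h z₀ ≤ h z} with hK
  have hKc : IsCompact K := by
    rw [Metric.isCompact_iff_isClosed_bounded]
    constructor
    · rw [← closure_subset_iff_isClosed]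
      intro x hx
      have hxU : x ∈ U := by
        by_contra hxU
        have hfx : x ∈ frontier U := by
          rw [frontier, hU.interior_eq]
          exact ⟨closure_mono (fun y hy => hy.1) hx, hxU⟩
        have h1 := hfr x hfx _ hlt
        have h2 : ∃ᶠ y in 𝓝 x, y ∈ K := mem_closure_iff_frequently.1 hx
        rw [eventually_nhdsWithin_iff] at h1
        obtain ⟨y, hy, hy'⟩ := (h2.and_eventually h1).exists
        exact absurd (hy' hy.1) (not_lt.2 hy.2)
      refine ⟨hxU, ?_⟩
      by_contra! hc
      have h1 := (hcontAt x hxU).eventually (gt_mem_nhds hc)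
      obtain ⟨y, hy, hy'⟩ := ((mem_closure_iff_frequently.1 hx).and_eventually h1).exists
      exact absurd hy' (not_lt.2 hy.2)
    · have := hinf _ hlt
      rw [Bornology.isBounded_def]
      filter_upwards [this] with y hy hyK
      exact absurd (hy hyK.1) (not_lt.2 hyK.2)
  have hcK : ContinuousOn h K := fun z hz => (hcontAt z hz.1).continuousWithinAt
  obtain ⟨z₁, hz₁, hmax⟩ := hKc.exists_isMaxOn ⟨z₀, hz₀, le_rfl⟩ hcK
  have hmaxU : ∀ z ∈ U, h z ≤ h z₁ := by
    intro z hz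
    by_cases hzK : h z₀ ≤ h z
    · exact hmax ⟨hz, hzK⟩
    · exact (not_le.1 hzK).le.trans hz₁.2
  set K' : Set ℂ := K ∩ h ⁻¹' {h z₁} with hK'
  have hK'c : IsCompact K' :=
    hKc.of_isClosed_subset (hcK.preimage_isClosed_of_isClosed hKc.isClosed isClosed_singleton)
      inter_subset_left
  obtain ⟨z₂, hz₂, hre⟩ := hK'c.exists_isMaxOn ⟨z₁, hz₁, rfl⟩ Complex.continuous_re.continuousOn
  obtain ⟨F, hF, he⟩ := hloc z₂ hz₂.1.1
  have heq : h z₂ = h z₁ := hz₂.2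
  have hUn : ∀ᶠ y in 𝓝 z₂, y ∈ U := hU.mem_nhds hz₂.1.1
  have hlm : IsLocalMax (norm ∘ F) z₂ := by
    filter_upwards [he, hUn] with y hy hyU
    simp only [Function.comp]
    rw [← hy, ← he.self_of_nhds, heq]
    exact hmaxU y hyU
  have hconst := Complex.eventually_eq_of_isLocalMax_norm
    (hF.eventually_analyticAt.mono fun y hy => hy.differentiableAt) hlm
  obtain ⟨ε, hε, hball⟩ := Metric.eventually_nhds_iff.1 ((he.and hUn).and hconst)
  have hd : dist (z₂ + (ε / 2 : ℝ)) z₂ < ε := by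
    rw [dist_eq_norm, add_sub_cancel_left, Complex.norm_real, Real.norm_eq_abs,
      abs_of_pos (by positivity)]
    linarith
  obtain ⟨⟨h1, h2⟩, h3⟩ := hball hd
  have h4 : h (z₂ + (ε / 2 : ℝ)) = h z₁ := by
    rw [h1, h3, ← he.self_of_nhds, heq]
  have h5 : (z₂ + (ε / 2 : ℝ)) ∈ K' := ⟨⟨h2, by rw [h4]; exact hz₁.2⟩, h4⟩
  have h6 := hre h5
  simp at h6
  linarith

/-- The logarithmic potential of `μ` at scale `r`. -/
def logPot (μ : Measure ℂ) (r : ℝ) (z : ℂ) : ℝ := ∫ w, Real.log (‖z - w‖ / r) ∂μ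

theorem lintegral_log_div_le {μ : Measure ℂ} {C : ℝ} (hC : 0 ≤ C)
    (hμ : ∀ z : ℂ, ∀ r > 0, μ (ball z r) ≤ ENNReal.ofReal (C * r)) (z : ℂ) {r : ℝ} (hr : 0 < r) :
    ∫⁻ w, ENNReal.ofReal (Real.log (r / ‖z - w‖)) ∂μ ≤ ENNReal.ofReal (2 * C * r) := by
  have hpt : ∀ w, ENNReal.ofReal (Real.log (r / ‖z - w‖)) ≤
      ∑' i : ℕ, (ball z (r / 2 ^ i)).indicator (fun _ => (1 : ℝ≥0∞)) w := by
    intro w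
    set x := r / ‖z - w‖ with hx
    rcases le_or_gt (Real.log x) 0 with h0 | h0
    · rw [ENNReal.ofReal_of_nonpos h0]; exact zero_le
    have hd : 0 < ‖z - w‖ := by
      rcases (norm_nonneg (z - w)).eq_or_lt with h | h
      · rw [hx, ← h] at h0; simp at h0
      · exact h
    have hxpos : 0 < x := by positivity
    set k := ⌈Real.log x⌉₊ with hk
    calc ENNReal.ofReal (Real.log x) ≤ ENNReal.ofReal (k : ℝ) :=
          ENNReal.ofReal_le_ofReal (Nat.le_ceil _)
      _ = ∑ i ∈ Finset.range k, (1 : ℝ≥0∞) := by simp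
      _ = ∑ i ∈ Finset.range k, (ball z (r / 2 ^ i)).indicator (fun _ => (1 : ℝ≥0∞)) w := by
          refine Finset.sum_congr rfl fun i hi => ?_
          rw [indicator_of_mem]
          have hi' : (i : ℝ) < Real.log x := Nat.lt_ceil.1 (Finset.mem_range.1 hi)
          have h1 : (2 : ℝ) ^ i < x := by
            calc (2 : ℝ) ^ i ≤ (Real.exp 1) ^ i := by
                  gcongr
                  have := Real.add_one_le_exp (1 : ℝ)
                  linarith
              _ = Real.exp i := by rw [← Real.exp_nat_mul, mul_one]
              _ < x := by rwa [← Real.lt_log_iff_exp_lt hxpos]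
          rw [mem_ball, dist_comm, dist_eq_norm, lt_div_iff₀ (by positivity)]
          rw [hx, lt_div_iff₀ hd] at h1
          linarith
      _ ≤ _ := ENNReal.sum_le_tsum _
  calc ∫⁻ w, ENNReal.ofReal (Real.log (r / ‖z - w‖)) ∂μ
      ≤ ∫⁻ w, ∑' i : ℕ, (ball z (r / 2 ^ i)).indicator (fun _ => (1 : ℝ≥0∞)) w ∂μ :=
        lintegral_mono hpt
    _ = ∑' i : ℕ, μ (ball z (r / 2 ^ i)) := by
        rw [lintegral_tsum fun i => (measurable_const.indicator measurableSet_ball).aemeasurable]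
        simp [lintegral_indicator measurableSet_ball]
    _ ≤ ∑' i : ℕ, ENNReal.ofReal (C * (r / 2 ^ i)) :=
        ENNReal.tsum_le_tsum fun i => hμ _ _ (by positivity)
    _ = ENNReal.ofReal (∑' i : ℕ, C * r * (1 / 2) ^ i) := by
        rw [ENNReal.ofReal_tsum_of_nonneg (fun i => by positivity)
          (summable_geometric_two.mul_left _)]
        congr 1; ext i; congr 1; simp; ring
    _ = ENNReal.ofReal (2 * C * r) := by
        rw [tsum_mul_left, tsum_geometric_two]; congr 1; ring

theorem integrable_max_log {μ : Measure ℂ} {C : ℝ} (hC : 0 ≤ C)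
    (hμ : ∀ z : ℂ, ∀ r > 0, μ (ball z r) ≤ ENNReal.ofReal (C * r)) (z : ℂ) {r : ℝ} (hr : 0 < r) :
    Integrable (fun w => max (Real.log (r / ‖z - w‖)) 0) μ ∧
      ∫ w, max (Real.log (r / ‖z - w‖)) 0 ∂μ ≤ 2 * C * r := by
  have hm : Measurable (fun w => max (Real.log (r / ‖z - w‖)) 0) := by fun_prop
  have hE : ∀ w, ENNReal.ofReal (max (Real.log (r / ‖z - w‖)) 0) =
      ENNReal.ofReal (Real.log (r / ‖z - w‖)) := by
    intro w
    rcases le_total (Real.log (r / ‖z - w‖)) 0 with h | h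
    · rw [max_eq_right h, ENNReal.ofReal_of_nonpos h, ENNReal.ofReal_zero]
    · rw [max_eq_left h]
  have h1 := lintegral_log_div_le hC hμ z hr
  constructor
  · rw [← lintegral_ofReal_ne_top_iff_integrable hm.aestronglyMeasurable
      (Eventually.of_forall fun w => le_max_right _ _)]
    simp_rw [hE]
    exact ne_top_of_le_ne_top ENNReal.ofReal_ne_top h1
  · rw [integral_eq_lintegral_of_nonneg_ae (f := fun w => max (Real.log (r / ‖z - w‖)) 0)
      (Eventually.of_forall fun w => le_max_right _ _) hm.aestronglyMeasurable]
    simp_rw [hE]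
    exact ENNReal.toReal_le_of_le_ofReal (by positivity) h1

theorem integrable_log_norm_sub_div {μ : Measure ℂ} [IsFiniteMeasure μ] {C : ℝ} (hC : 0 ≤ C)
    (hμ : ∀ z : ℂ, ∀ r > 0, μ (ball z r) ≤ ENNReal.ofReal (C * r)) {S : Set ℂ}
    (hS : IsBounded S) (hSμ : ∀ᵐ w ∂μ, w ∈ S) (z : ℂ) {r : ℝ} (hr : 0 < r) :
    Integrable (fun w => Real.log (‖z - w‖ / r)) μ := by
  obtain ⟨R, hR⟩ := hS.subset_closedBall z
  refine Integrable.mono' (((integrable_max_log hC hμ z hr).1).add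
    (integrable_const (|R| / r)))
    (Measurable.aestronglyMeasurable (by fun_prop)) ?_
  filter_upwards [hSμ] with w hw
  have hd : ‖z - w‖ ≤ |R| := by
    have := hR hw
    rw [mem_closedBall, dist_comm, dist_eq_norm] at this
    exact this.trans (le_abs_self _)
  have h1 : Real.log (r / ‖z - w‖) = - Real.log (‖z - w‖ / r) := by
    rw [← Real.log_inv, inv_div]
  simp only [Pi.add_apply]
  rw [h1, Real.norm_eq_abs, abs_le]
  have h2 : Real.log (‖z - w‖ / r) ≤ ‖z - w‖ / r := Real.log_le_self (by positivity)
  have h3 : ‖z - w‖ / r ≤ |R| / r := by gcongr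
  have h4 : 0 ≤ |R| / r := by positivity
  constructor
  · have := le_max_left (- Real.log (‖z - w‖ / r)) 0
    linarith
  · have := le_max_right (- Real.log (‖z - w‖ / r)) 0
    linarith

theorem measure_singleton_of_growth {μ : Measure ℂ} {C : ℝ}
    (hμ : ∀ z : ℂ, ∀ r > 0, μ (ball z r) ≤ ENNReal.ofReal (C * r)) (z : ℂ) : μ {z} = 0 := by
  have hlim : Tendsto (fun r : ℝ => ENNReal.ofReal (C * r)) (𝓝[>] 0) (𝓝 0) := by
    have : Tendsto (fun r : ℝ => ENNReal.ofReal (C * r)) (𝓝 0) (𝓝 (ENNReal.ofReal (C * 0))) :=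
      (ENNReal.continuous_ofReal.comp (continuous_const.mul continuous_id)).tendsto 0
    simp only [mul_zero, ENNReal.ofReal_zero] at this
    exact this.mono_left nhdsWithin_le_nhds
  refine le_antisymm (ge_of_tendsto hlim ?_) zero_le
  filter_upwards [self_mem_nhdsWithin] with r hr
  exact (measure_mono (singleton_subset_iff.2 (mem_ball_self hr))).trans (hμ z r hr)

theorem le_logPot {μ : Measure ℂ} [IsFiniteMeasure μ] {C : ℝ} (hC : 0 ≤ C)
    (hμ : ∀ z : ℂ, ∀ r > 0, μ (ball z r) ≤ ENNReal.ofReal (C * r)) {S : Set ℂ}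
    (hS : IsBounded S) (hSμ : ∀ᵐ w ∂μ, w ∈ S) (z : ℂ) {r : ℝ} (hr : 0 < r) {b : ℝ}
    (hb : ∀ w ∈ S, w ≠ z → b ≤ Real.log (‖z - w‖ / r) + max (Real.log (r / ‖z - w‖)) 0) :
    b * μ.real univ - 2 * C * r ≤ logPot μ r z := by
  obtain ⟨h1, h2⟩ := integrable_max_log hC hμ z hr
  have h3 := integrable_log_norm_sub_div hC hμ hS hSμ z hr
  have hz : ∀ᵐ w ∂μ, w ≠ z := by
    rw [ae_iff]; simpa using measure_singleton_of_growth hμ z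
  have h4 : ∫ _, b ∂μ ≤
      ∫ w, (Real.log (‖z - w‖ / r) + max (Real.log (r / ‖z - w‖)) 0) ∂μ := by
    refine integral_mono_ae (integrable_const _) (h3.add h1) ?_
    filter_upwards [hSμ, hz] with w hw hw'
    exact hb w hw hw'
  rw [integral_add h3 h1, integral_const, smul_eq_mul, mul_comm] at h4
  unfold logPot
  linarith

theorem logPot_le {μ : Measure ℂ} [IsFiniteMeasure μ] {C : ℝ} (hC : 0 ≤ C)
    (hμ : ∀ z : ℂ, ∀ r > 0, μ (ball z r) ≤ ENNReal.ofReal (C * r)) {S : Set ℂ}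
    (hS : IsBounded S) (hSμ : ∀ᵐ w ∂μ, w ∈ S) (z : ℂ) {r : ℝ} (hr : 0 < r) {b : ℝ}
    (hb : ∀ w ∈ S, Real.log (‖z - w‖ / r) ≤ b) :
    logPot μ r z ≤ b * μ.real univ := by
  have h3 := integrable_log_norm_sub_div hC hμ hS hSμ z hr
  have h4 : ∫ w, Real.log (‖z - w‖ / r) ∂μ ≤ ∫ _, b ∂μ :=
    integral_mono_ae h3 (integrable_const _) (hSμ.mono hb)
  rw [integral_const, smul_eq_mul, mul_comm] at h4
  exact h4

theorem exists_analyticAt_norm_eq_exp_logPot {μ : Measure ℂ} [IsFiniteMeasure μ] {C : ℝ}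
    (hC : 0 ≤ C) (hμ : ∀ z : ℂ, ∀ r > 0, μ (ball z r) ≤ ENNReal.ofReal (C * r)) {S : Set ℂ}
    (hSc : IsCompact S) (hSμ : ∀ᵐ w ∂μ, w ∈ S) {r : ℝ} (hr : 0 < r) (a : ℝ) {z : ℂ}
    (hz : z ∉ S) :
    ∃ F : ℂ → ℂ, AnalyticAt ℂ F z ∧
      ∀ᶠ y in 𝓝 z, Real.exp (-(a * logPot μ r y)) = ‖F y‖ := by
  obtain ⟨ε, hε, hball⟩ := Metric.isOpen_iff.1 hSc.isClosed.isOpen_compl z hz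
  have hfar : ∀ w ∈ S, ε ≤ ‖z - w‖ := by
    intro w hw
    by_contra! h
    refine hball ?_ hw
    rwa [mem_ball, dist_comm, dist_eq_norm]
  set V : ℂ → ℂ := fun y => ∫ w, Complex.log ((y - w) / (z - w)) ∂μ with hV
  have hslit : ∀ w ∈ S, ∀ y ∈ ball z (ε / 2), (y - w) / (z - w) ∈ slitPlane := by
    intro w hw y hy
    have hne : z - w ≠ 0 := norm_pos_iff.1 (hε.trans_le (hfar w hw))
    have h1 : (y - w) / (z - w) = 1 + (y - z) / (z - w) := by field_simp; ring
    rw [h1]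
    left
    have h2 : ‖(y - z) / (z - w)‖ < 1 := by
      rw [norm_div, div_lt_one (hε.trans_le (hfar w hw))]
      rw [mem_ball, dist_eq_norm] at hy
      linarith [hfar w hw]
    have h3 := abs_le.1 (Complex.abs_re_le_norm ((y - z) / (z - w)))
    simp only [add_re, one_re]
    linarith
  have hne' : ∀ w ∈ S, ∀ y ∈ ball z (ε / 2), ε / 2 ≤ ‖y - w‖ := by
    intro w hw y hy
    rw [mem_ball, dist_comm, dist_eq_norm] at hy
    have := norm_sub_le_norm_sub_add_norm_sub z y w
    linarith [hfar w hw]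
  have hint : ∀ y ∈ ball z (ε / 2),
      Integrable (fun w => Complex.log ((y - w) / (z - w))) μ := by
    intro y hy
    have hco : ContinuousOn (fun w => Complex.log ((y - w) / (z - w))) S := by
      refine ContinuousOn.clog ?_ (fun w hw => hslit w hw y hy)
      refine ContinuousOn.div (by fun_prop) (by fun_prop) fun w hw => ?_
      exact norm_pos_iff.1 (hε.trans_le (hfar w hw))
    have h1 : IntegrableOn (fun w => Complex.log ((y - w) / (z - w))) S μ :=
      hco.integrableOn_compact hSc
    rwa [IntegrableOn, Measure.restrict_eq_self_of_ae_mem hSμ] at h1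
  have hderiv : ∀ y ∈ ball z (ε / 2), DifferentiableAt ℂ V y := by
    intro y hy
    have key := hasDerivAt_integral_of_dominated_loc_of_deriv_le (μ := μ) (𝕜 := ℂ)
      (F := fun y w => Complex.log ((y - w) / (z - w))) (F' := fun y w => 1 / (y - w))
      (x₀ := y) (s := ball z (ε / 2)) (bound := fun _ => 2 / ε)
      (isOpen_ball.mem_nhds hy) (by
        filter_upwards [isOpen_ball.mem_nhds hy] with x hx
        exact (hint x hx).aestronglyMeasurable) (hint y hy)
      (Measurable.aestronglyMeasurable (by fun_prop)) ?_
        (integrable_const _) ?_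
    · exact key.2.differentiableAt
    · filter_upwards [hSμ] with w hw x hx
      rw [norm_div, norm_one]
      have := hne' w hw x hx
      calc 1 / ‖x - w‖ ≤ 1 / (ε / 2) := by gcongr
        _ = 2 / ε := by field_simp
    · filter_upwards [hSμ] with w hw x hx
      have hzw : z - w ≠ 0 := norm_pos_iff.1 (hε.trans_le (hfar w hw))
      have hxw : x - w ≠ 0 := norm_pos_iff.1 ((half_pos hε).trans_le (hne' w hw x hx))
      have h1 : HasDerivAt (fun x => (x - w) / (z - w)) (1 / (z - w)) x :=
        ((hasDerivAt_id x).sub_const w).div_const _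
      have h2 := h1.clog (hslit w hw x hx)
      rwa [div_div_div_cancel_right₀ hzw] at h2
  have hVan : AnalyticAt ℂ V z := by
    have hd : DifferentiableOn ℂ V (ball z (ε / 2)) :=
      fun y hy => (hderiv y hy).differentiableWithinAt
    exact hd.analyticAt (isOpen_ball.mem_nhds (mem_ball_self (half_pos hε)))
  refine ⟨fun y => Complex.exp (-((a : ℂ) * (V y + (logPot μ r z : ℂ)))), ?_, ?_⟩
  · fun_prop
  filter_upwards [isOpen_ball.mem_nhds (mem_ball_self (half_pos hε) : z ∈ ball z (ε / 2))] with y hy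
  rw [Complex.norm_exp]
  congr 1
  have hre : (V y).re = logPot μ r y - logPot μ r z := by
    have h1 : (V y).re = ∫ w, (Complex.log ((y - w) / (z - w))).re ∂μ := by
      have := integral_re (hint y hy)
      simpa using this.symm
    rw [h1]
    unfold logPot
    rw [← integral_sub (integrable_log_norm_sub_div hC hμ hSc.isBounded hSμ y hr)
      (integrable_log_norm_sub_div hC hμ hSc.isBounded hSμ z hr)]
    refine integral_congr_ae ?_
    filter_upwards [hSμ] with w hw
    have hzw : 0 < ‖z - w‖ := hε.trans_le (hfar w hw)
    have hyw : 0 < ‖y - w‖ := (half_pos hε).trans_le (hne' w hw y hy)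
    rw [Complex.log_re, norm_div, Real.log_div hyw.ne' hzw.ne', Real.log_div hyw.ne' hr.ne',
      Real.log_div hzw.ne' hr.ne']
    ring
  rw [neg_re, re_ofReal_mul, add_re, ofReal_re, hre]
  ring

/-- Harnack inequality for `log ‖f‖` where `f` is holomorphic with `‖f‖ > 1` in a disk. -/
theorem log_norm_le_harnack {f : ℂ → ℂ} {c : ℂ} {d : ℝ} (hf : DifferentiableOn ℂ f (ball c d))
    (h1 : ∀ z ∈ ball c d, 1 < ‖f z‖) {z : ℂ} (hz : z ∈ ball c d) :
    (d - dist z c) * Real.log ‖f c‖ ≤ (d + dist z c) * Real.log ‖f z‖ := by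
  have hd : 0 < d := dist_nonneg.trans_lt (mem_ball.1 hz)
  have hcm : c ∈ ball c d := mem_ball_self hd
  have hne : ∀ z ∈ ball c d, f z ≠ 0 := fun z hz =>
    norm_pos_iff.1 (zero_lt_one.trans (h1 z hz))
  have hdf : DifferentiableOn ℂ (deriv f) (ball c d) := hf.deriv isOpen_ball
  obtain ⟨G, hG⟩ := (hdf.div hf hne).isExactOn_ball
  have hconst : ∀ y ∈ ball c d, Complex.exp (-G y) * f y = Complex.exp (-G c) * f c := by
    intro y hy
    refine (convex_ball c d).is_const_of_fderivWithin_eq_zero (𝕜 := ℂ)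
      (f := fun y => Complex.exp (-G y) * f y) ?_ ?_ hy hcm
    · intro x hx
      have hfx := (hf x hx).differentiableAt (isOpen_ball.mem_nhds hx)
      have hGx := (hG x hx).differentiableAt
      exact (hGx.neg.cexp.mul hfx).differentiableWithinAt
    · intro x hx
      have hfx := ((hf x hx).differentiableAt (isOpen_ball.mem_nhds hx)).hasDerivAt
      have hd0 : HasDerivAt (fun y => Complex.exp (-G y) * f y) 0 x := by
        have := (hG x hx).neg.cexp.mul hfx
        convert! this using 1
        simp only [Pi.div_apply, Pi.neg_apply]
        field_simp [hne x hx]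
        ring
      have h2 := hd0.hasFDerivAt.hasFDerivWithinAt (s := ball c d)
      rw [h2.fderivWithin (isOpen_ball.uniqueDiffWithinAt hx)]
      ext; simp
  set k : ℂ := Complex.log (Complex.exp (-G c) * f c) with hk
  have hexpk : Complex.exp k = Complex.exp (-G c) * f c :=
    Complex.exp_log (mul_ne_zero (Complex.exp_ne_zero _) (hne c hcm))
  set F : ℂ → ℂ := fun y => G y + k with hF
  have hre : ∀ y ∈ ball c d, (F y).re = Real.log ‖f y‖ := by
    intro y hy
    have : f y = Complex.exp (F y) := by
      rw [hF]; simp only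
      rw [Complex.exp_add, hexpk, ← hconst y hy, ← mul_assoc, ← Complex.exp_add]; simp
    rw [this, Complex.norm_exp, Real.log_exp]
  have hpos : ∀ y ∈ ball c d, 0 < (F y).re := fun y hy => by
    rw [hre y hy]; exact Real.log_pos (h1 y hy)
  have hFd : DifferentiableOn ℂ F (ball c d) := fun y hy =>
    ((hG y hy).differentiableAt.add_const k).differentiableWithinAt
  set a := F c with ha
  have hden : ∀ y ∈ ball c d, F y + (starRingEnd ℂ) a ≠ 0 := by
    intro y hy h0
    have := congrArg Complex.re h0
    simp only [add_re, conj_re, zero_re] at this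
    linarith [hpos y hy, hpos c hcm]
  have hS := dist_le_div_mul_dist_of_mapsTo_ball (R₂ := 1)
    (f := fun y => (F y - a) / (F y + (starRingEnd ℂ) a)) (c := c) (R₁ := d)
    (DifferentiableOn.div (hFd.sub_const _) (hFd.add_const _) hden) (by
      intro y hy
      simp only [← ha, sub_self, zero_div, mem_closedBall, dist_zero_right, norm_div]
      rw [div_le_one (norm_pos_iff.2 (hden y hy))]
      rw [← sq_le_sq₀ (norm_nonneg _) (norm_nonneg _), Complex.sq_norm, Complex.sq_norm,
        normSq_apply, normSq_apply]
      simp only [sub_re, sub_im, add_re, add_im, conj_re, conj_im]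
      nlinarith [mul_pos (hpos y hy) (hpos c hcm)]) hz
  simp only [← ha, sub_self, zero_div, dist_zero_right, norm_div] at hS
  set ρ := dist z c with hρ
  have hρd : ρ < d := hz
  have hρ0 : 0 ≤ ρ := dist_nonneg
  rw [div_le_iff₀ (norm_pos_iff.2 (hden z hz))] at hS
  have hS2 : d * ‖F z - a‖ ≤ ρ * ‖F z + (starRingEnd ℂ) a‖ := by
    have := mul_le_mul_of_nonneg_left hS hd.le
    calc d * ‖F z - a‖ ≤ _ := this
      _ = _ := by field_simp
  have hS3 : d ^ 2 * normSq (F z - a) ≤ ρ ^ 2 * normSq (F z + (starRingEnd ℂ) a) := by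
    rw [← Complex.sq_norm, ← Complex.sq_norm, ← mul_pow, ← mul_pow]
    gcongr
  rw [normSq_apply, normSq_apply] at hS3
  simp only [sub_re, sub_im, add_re, add_im, conj_re, conj_im] at hS3
  rw [← hre z hz, ← hre c hcm, ← ha]
  have hx := hpos z hz
  have hA := hpos c hcm
  rw [← ha] at hA
  have h5 : (d * (a.re - (F z).re)) ^ 2 ≤ (ρ * ((F z).re + a.re)) ^ 2 := by
    have h6 : ρ ^ 2 ≤ d ^ 2 := by gcongr
    nlinarith [mul_le_mul_of_nonneg_right h6 (sq_nonneg ((F z).im - a.im))]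
  have h7 := (le_abs_self _).trans (abs_le_of_sq_le_sq h5 (by positivity))
  linarith

theorem isPreconnected_setOf_lt_norm {r : ℝ} (hr : 0 < r) :
    IsPreconnected {w : ℂ | r < ‖w‖} := by
  have h : {w : ℂ | r < ‖w‖} = Complex.exp '' {z : ℂ | Real.log r < z.re} := by
    ext w
    simp only [mem_ofPred_eq, mem_image]
    constructor
    · intro hw
      have hw0 : w ≠ 0 := norm_pos_iff.1 (hr.trans hw)
      refine ⟨Complex.log w, ?_, Complex.exp_log hw0⟩
      rw [Complex.log_re]
      exact Real.log_lt_log hr hw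
    · rintro ⟨z, hz, rfl⟩
      rw [Complex.norm_exp]
      exact (Real.log_lt_iff_lt_exp hr).1 hz
  rw [h]
  exact ((convex_halfSpace_re_gt _).isPreconnected).image _ Complex.continuous_exp.continuousOn

section UnboundedComponent

variable {Γ : Set ℂ}

theorem mem_unboundedComponent_of_isPreconnected {V : Set ℂ} (hV : IsPreconnected V)
    (hVΓ : V ⊆ Γᶜ) {y z : ℂ} (hy : y ∈ V) (hz : z ∈ V) (h : z ∈ unboundedComponent Γ) :
    y ∈ unboundedComponent Γ := by
  refine ⟨hVΓ hy, ?_⟩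
  rw [← connectedComponentIn_eq (hV.subset_connectedComponentIn hz hVΓ hy)]
  exact h.2

theorem isOpen_unboundedComponent (hΓ : IsClosed Γ) : IsOpen (unboundedComponent Γ) := by
  rw [Metric.isOpen_iff]
  intro z hz
  obtain ⟨ε, hε, hb⟩ := Metric.isOpen_iff.1 hΓ.isOpen_compl z hz.1
  exact ⟨ε, hε, fun y hy => mem_unboundedComponent_of_isPreconnected isPreconnected_ball hb hy
    (mem_ball_self hε) hz⟩

theorem isOpen_compl_diff_unboundedComponent (hΓ : IsClosed Γ) :
    IsOpen (Γᶜ \ unboundedComponent Γ) := by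
  rw [Metric.isOpen_iff]
  intro z hz
  obtain ⟨ε, hε, hb⟩ := Metric.isOpen_iff.1 hΓ.isOpen_compl z hz.1
  exact ⟨ε, hε, fun y hy => ⟨hb hy, fun h => hz.2 (mem_unboundedComponent_of_isPreconnected
    isPreconnected_ball hb (mem_ball_self hε) hy h)⟩⟩

theorem mem_unboundedComponent_of_subset_closedBall {R : ℝ} (hR : 0 ≤ R)
    (hΓ : Γ ⊆ closedBall 0 R) {z : ℂ} (hz : R < ‖z‖) : z ∈ unboundedComponent Γ := by
  have hray : IsPreconnected ((fun t : ℝ => (t : ℂ) * z) '' Ici 1) :=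
    isPreconnected_Ici.image _ (by fun_prop)
  have hn : ∀ t : ℝ, 1 ≤ t → R < ‖(t : ℂ) * z‖ := by
    intro t ht
    rw [norm_mul, Complex.norm_real, Real.norm_eq_abs, abs_of_pos (by linarith)]
    nlinarith [norm_nonneg z]
  have hsub : (fun t : ℝ => (t : ℂ) * z) '' Ici 1 ⊆ Γᶜ := by
    rintro _ ⟨t, ht, rfl⟩ hmem
    have := hΓ hmem
    rw [mem_closedBall, dist_zero_right] at this
    exact absurd (hn t ht) (not_lt.2 this)
  have hzm : z ∈ (fun t : ℝ => (t : ℂ) * z) '' Ici 1 := ⟨1, by simp, by simp⟩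
  refine ⟨hsub hzm, fun hb => ?_⟩
  obtain ⟨B, hB⟩ := (hb.subset (hray.subset_connectedComponentIn hzm hsub)).exists_norm_le
  have hz0 : 0 < ‖z‖ := hR.trans_lt hz
  have h1 := hB (((max 1 ((|B| + 1) / ‖z‖) : ℝ) : ℂ) * z) ⟨_, mem_Ici.2 (le_max_left _ _), rfl⟩
  rw [norm_mul, Complex.norm_real, Real.norm_eq_abs,
    abs_of_pos (zero_lt_one.trans_le (le_max_left _ _))] at h1
  have h2 : (|B| + 1) / ‖z‖ * ‖z‖ ≤ B :=
    (mul_le_mul_of_nonneg_right (le_max_right _ _) hz0.le).trans h1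
  rw [div_mul_cancel₀ _ hz0.ne'] at h2
  linarith [le_abs_self B]

variable {Φ : ℂ → ℂ}

theorem isOpen_image_of_isExtConformal (hΓ : IsClosed Γ)
    (hΦ : IsExtConformal (unboundedComponent Γ) Φ) {V : Set ℂ} (hV : IsOpen V)
    (hVΩ : V ⊆ unboundedComponent Γ) : IsOpen (Φ '' V) := by
  rw [isOpen_iff_mem_nhds]
  rintro _ ⟨z, hz, rfl⟩
  have hVn := hV.mem_nhds hz
  have han : AnalyticAt ℂ Φ z :=
    hΦ.1.analyticAt ((isOpen_unboundedComponent hΓ).mem_nhds (hVΩ hz))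
  rcases han.eventually_constant_or_nhds_le_map_nhds with h | h
  · exfalso
    have h1 : ∀ᶠ y in 𝓝[≠] z, False := by
      filter_upwards [nhdsWithin_le_nhds (h.and hVn), self_mem_nhdsWithin] with y hy hyz
      exact hyz (hΦ.2.1.injOn (hVΩ hy.2) (hVΩ hz) hy.1)
    simpa using h1.exists
  · exact h (image_mem_map hVn)

theorem tendsto_norm_extConformal_cobounded (hΦ : IsExtConformal (unboundedComponent Γ) Φ) :
    ∃ a > 0, ∀ᶠ z in cobounded ℂ, a * ‖z‖ ≤ ‖Φ z‖ := by
  obtain ⟨-, -, c, hc, hlim⟩ := hΦ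
  refine ⟨c / 2, by positivity, ?_⟩
  have h1 := hlim.norm
  rw [Complex.norm_real, Real.norm_eq_abs, abs_of_pos hc] at h1
  have h2 : ∀ᶠ z : ℂ in cobounded ℂ, 0 < ‖z‖ :=
    (tendsto_norm_cobounded_atTop (E := ℂ)).eventually_gt_atTop 0
  filter_upwards [h1.eventually (lt_mem_nhds (half_lt_self hc)), h2] with z hz hz0
  rw [norm_div, lt_div_iff₀ hz0] at hz
  exact hz.le

theorem exists_lt_norm_of_lt_norm_extConformal (hΓ : IsCompact Γ)
    (hΦ : IsExtConformal (unboundedComponent Γ) Φ) (R₀ : ℝ) :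
    ∃ r : ℝ, ∀ z ∈ unboundedComponent Γ, r < ‖Φ z‖ → R₀ < ‖z‖ := by
  obtain ⟨R₁, hR₁⟩ := hΓ.isBounded.subset_closedBall 0
  set R := max (max R₀ R₁) 0 + 1 with hR
  have hR1 : R₁ < R := by
    have := (le_max_right R₀ R₁).trans (le_max_left (max R₀ R₁) 0); linarith
  have hR0 : R₀ < R := by
    have := (le_max_left R₀ R₁).trans (le_max_left (max R₀ R₁) 0); linarith
  have hRpos : 0 < R := by
    have := le_max_right (max R₀ R₁) 0; linarith
  have hΓR : Γ ⊆ closedBall 0 (max (max R₀ R₁) 0) :=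
    hR₁.trans (closedBall_subset_closedBall ((le_max_right R₀ R₁).trans (le_max_left _ _)))
  have hbig : ∀ z : ℂ, R ≤ ‖z‖ → z ∈ unboundedComponent Γ := fun z hz =>
    mem_unboundedComponent_of_subset_closedBall (le_max_right _ _) hΓR (by linarith)
  have hΩo := isOpen_unboundedComponent hΓ.isClosed
  have hcont : ContinuousOn Φ (sphere 0 R) := hΦ.1.continuousOn.mono fun z hz =>
    hbig z (by simpa using (mem_sphere_zero_iff_norm.1 hz).ge)
  obtain ⟨B, hB⟩ := ((isCompact_sphere (0 : ℂ) R).image_of_continuousOn hcont).isBounded.exists_norm_le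
  set r := max B 1 with hr
  have hr1 : 1 ≤ r := le_max_right _ _
  set V₁ := unboundedComponent Γ ∩ {z | ‖z‖ < R}
  set V₂ := unboundedComponent Γ ∩ {z | R < ‖z‖}
  have hV₁ : IsOpen (Φ '' V₁) := isOpen_image_of_isExtConformal hΓ.isClosed hΦ
    (hΩo.inter (isOpen_lt continuous_norm continuous_const)) inter_subset_left
  have hV₂ : IsOpen (Φ '' V₂) := isOpen_image_of_isExtConformal hΓ.isClosed hΦ
    (hΩo.inter (isOpen_lt continuous_const continuous_norm)) inter_subset_left
  have hdisj : Disjoint (Φ '' V₁) (Φ '' V₂) := by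
    rw [Set.disjoint_left]
    rintro _ ⟨z, hz, rfl⟩ ⟨y, hy, hyz⟩
    have := hΦ.2.1.injOn hy.1 hz.1 hyz
    rw [this] at hy
    have h1 : ‖z‖ < R := hz.2
    have h2 : R < ‖z‖ := hy.2
    linarith
  have hcov : {w : ℂ | r < ‖w‖} ⊆ Φ '' V₁ ∪ Φ '' V₂ := by
    intro w hw
    obtain ⟨z, hz, rfl⟩ := hΦ.2.1.surjOn (show w ∈ extDisk from hr1.trans_lt hw)
    rcases lt_trichotomy ‖z‖ R with h | h | h
    · exact Or.inl ⟨z, ⟨hz, h⟩, rfl⟩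
    · exfalso
      have := hB (Φ z) ⟨z, by simpa using h, rfl⟩
      have h2 : r < ‖Φ z‖ := hw
      linarith [le_max_left B 1]
    · exact Or.inr ⟨z, ⟨hz, h⟩, rfl⟩
  have hmeet : ({w : ℂ | r < ‖w‖} ∩ Φ '' V₂).Nonempty := by
    obtain ⟨a, ha, hev⟩ := tendsto_norm_extConformal_cobounded hΦ
    have hN := tendsto_norm_cobounded_atTop (E := ℂ)
    obtain ⟨z, ⟨h1, h2⟩, h3⟩ := ((hev.and (hN.eventually_gt_atTop R)).and
      (hN.eventually_gt_atTop (r / a))).exists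
    rw [div_lt_iff₀ ha] at h3
    exact ⟨Φ z, by simp only [mem_ofPred_eq]; linarith, z, ⟨hbig z h2.le, h2⟩, rfl⟩
  have hsub := (isPreconnected_setOf_lt_norm (zero_lt_one.trans_le hr1)).subset_right_of_subset_union
    hV₁ hV₂ hdisj hcov hmeet
  refine ⟨r, fun z hz hw => ?_⟩
  obtain ⟨y, hy, hyz⟩ := hsub hw
  have := hΦ.2.1.injOn hy.1 hz hyz
  rw [← this]
  exact hR0.trans hy.2

theorem eventually_norm_extConformal_lt (hΓ : IsCompact Γ)
    (hΦ : IsExtConformal (unboundedComponent Γ) Φ) {ζ : ℂ} (hζ : ζ ∈ Γ) {δ : ℝ} (hδ : 0 < δ) :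
    ∀ᶠ z in 𝓝[unboundedComponent Γ] ζ, ‖Φ z‖ < 1 + δ := by
  by_contra hcon
  rw [Filter.not_eventually] at hcon
  set l := 𝓝[unboundedComponent Γ] ζ ⊓ 𝓟 {z | ¬ ‖Φ z‖ < 1 + δ} with hl
  have hne : l.NeBot := frequently_mem_iff_neBot.1 hcon
  obtain ⟨r, hr⟩ := exists_lt_norm_of_lt_norm_extConformal hΓ hΦ (‖ζ‖ + 1)
  have hnear : ∀ᶠ z in 𝓝 ζ, ‖z‖ < ‖ζ‖ + 1 :=
    continuous_norm.continuousAt.eventually (gt_mem_nhds (lt_add_one _))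
  have hlζ : l ≤ 𝓝 ζ := inf_le_left.trans nhdsWithin_le_nhds
  have hlΩ : ∀ᶠ z in l, z ∈ unboundedComponent Γ :=
    (inf_le_left : l ≤ _) self_mem_nhdsWithin
  have hlδ : ∀ᶠ z in l, ¬ ‖Φ z‖ < 1 + δ := (inf_le_right : l ≤ _) (mem_principal_self _)
  set A : Set ℂ := closedBall 0 r ∩ {w | 1 + δ ≤ ‖w‖} with hA
  have hAc : IsCompact A :=
    (isCompact_closedBall 0 r).inter_right (isClosed_le continuous_const continuous_norm)
  have hmem : ∀ᶠ z in l, Φ z ∈ A := by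
    filter_upwards [hlΩ, hlδ, hlζ hnear] with z h1 h2 h3
    refine ⟨?_, not_lt.1 h2⟩
    rw [mem_closedBall, dist_zero_right]
    by_contra! h4
    linarith [hr z h1 h4]
  obtain ⟨w, hwA, hw⟩ := hAc.exists_mapClusterPt (f := l) (u := Φ) (le_principal_iff.2 (mem_map.2 hmem))
  have hw1 : w ∈ extDisk := by
    have : 1 + δ ≤ ‖w‖ := hwA.2
    show 1 < ‖w‖
    linarith
  obtain ⟨z', hz', rfl⟩ := hΦ.2.1.surjOn hw1
  have hne' : z' ≠ ζ := fun h => hz'.1 (h ▸ hζ)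
  obtain ⟨N, N', hN, hN', hzN, hζN', hdis⟩ := t2_separation hne'
  have hop : IsOpen (Φ '' (N ∩ unboundedComponent Γ)) :=
    isOpen_image_of_isExtConformal hΓ.isClosed hΦ
      (hN.inter (isOpen_unboundedComponent hΓ.isClosed)) inter_subset_right
  have hfr := (mapClusterPt_iff_frequently.1 hw) _ (hop.mem_nhds ⟨z', ⟨hzN, hz'⟩, rfl⟩)
  obtain ⟨z, ⟨y, hy, hyz⟩, h2, h3⟩ :=
    (hfr.and_eventually (hlΩ.and (hlζ (hN'.mem_nhds hζN')))).exists
  have := hΦ.2.1.injOn hy.2 h2 hyz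
  rw [this] at hy
  exact Set.disjoint_left.1 hdis hy.1 h3

theorem log_norm_extConformal_le (hΓ : IsCompact Γ) (hΓne : Γ.Nonempty)
    (hΦ : IsExtConformal (unboundedComponent Γ) Φ) {s δ K : ℝ} (hs : 0 < s) (hδ : 0 < δ)
    (hK : 1 ≤ K) (hsd : ∀ a ∈ Γ, ∀ b ∈ levelCurve (unboundedComponent Γ) Φ δ, s ≤ dist a b)
    {z : ℂ} (hz : z ∈ unboundedComponent Γ) (hzd : infDist z Γ ≤ K * s) :
    Real.log ‖Φ z‖ ≤ 4 * K * δ := by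
  obtain ⟨ζ, hζ, hζd⟩ := hΓ.exists_infDist_eq_dist hΓne z
  set d := dist z ζ with hd
  have hdpos : 0 < d := dist_pos.2 fun h => hz.1 (h ▸ hζ)
  have hball : ball z d ⊆ Γᶜ := by
    intro y hy hyΓ
    have h1 := infDist_le_dist_of_mem hyΓ (x := z)
    rw [mem_ball, dist_comm] at hy
    linarith
  have hballΩ : ball z d ⊆ unboundedComponent Γ := fun y hy =>
    mem_unboundedComponent_of_isPreconnected isPreconnected_ball hball hy (mem_ball_self hdpos) hz
  set q : ℝ → ℂ := fun t => ζ + (t : ℂ) * (z - ζ) with hq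
  have hqc : Continuous q := by fun_prop
  have hnd : ‖z - ζ‖ = d := by rw [hd, dist_eq_norm]
  have hqz : ∀ t : ℝ, t ≤ 1 → dist (q t) z = (1 - t) * d := by
    intro t ht
    rw [dist_eq_norm, show q t - z = ((t - 1 : ℝ) : ℂ) * (z - ζ) by simp [hq]; ring, norm_mul,
      Complex.norm_real, Real.norm_eq_abs, abs_of_nonpos (by linarith), hnd]
    ring
  have hqζ : ∀ t : ℝ, 0 ≤ t → dist ζ (q t) = t * d := by
    intro t ht
    rw [dist_comm, dist_eq_norm, show q t - ζ = (t : ℂ) * (z - ζ) by simp [hq], norm_mul,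
      Complex.norm_real, Real.norm_eq_abs, abs_of_nonneg ht, hnd]
  have hqΩ : ∀ t : ℝ, 0 < t → t ≤ 1 → q t ∈ unboundedComponent Γ := by
    intro t ht ht1
    refine hballΩ ?_
    rw [mem_ball, hqz t ht1]
    nlinarith
  set t₀ := min d s / (2 * d) with ht₀
  have hm0 : 0 < min d s := lt_min hdpos hs
  have ht₀pos : 0 < t₀ := by positivity
  have ht₀d : t₀ * d = min d s / 2 := by rw [ht₀]; field_simp
  have ht₀1 : t₀ ≤ 1 / 2 := by
    rw [ht₀, div_le_div_iff₀ (by positivity) (by norm_num)]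
    linarith [min_le_left d s]
  have hlt : ‖Φ (q t₀)‖ < 1 + δ := by
    by_contra! hge
    have hq0 : Tendsto q (𝓝[>] 0) (𝓝[unboundedComponent Γ] ζ) := by
      refine tendsto_nhdsWithin_iff.2 ⟨?_, ?_⟩
      · have := hqc.tendsto 0
        simp only [hq, ofReal_zero, zero_mul, add_zero] at this
        exact this.mono_left nhdsWithin_le_nhds
      · filter_upwards [Ioo_mem_nhdsGT (zero_lt_one' ℝ)] with t ht
        exact hqΩ t ht.1 ht.2.le
    obtain ⟨t₁, ht₁, ht₁'⟩ := ((hq0.eventually (eventually_norm_extConformal_lt hΓ hΦ hζ hδ)).and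
      (Ioo_mem_nhdsGT ht₀pos)).exists
    have hcont : ContinuousOn (fun t => ‖Φ (q t)‖) (Icc t₁ t₀) := by
      refine (hΦ.1.continuousOn.comp hqc.continuousOn fun t ht => ?_).norm
      exact hqΩ t (ht₁'.1.trans_le ht.1) (by linarith [ht.2])
    obtain ⟨t, ht, hte⟩ := intermediate_value_Icc ht₁'.2.le hcont ⟨ht₁.le, hge⟩
    have htpos : 0 < t := ht₁'.1.trans_le ht.1
    have h1 := hsd ζ hζ (q t) ⟨hqΩ t htpos (by linarith [ht.2]), hte⟩
    rw [hqζ t htpos.le] at h1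
    have h2 : t * d ≤ t₀ * d := by gcongr; exact ht.2
    linarith [min_le_right d s]
  have hq1 : 1 < ‖Φ (q t₀)‖ := hΦ.2.1.mapsTo (hqΩ t₀ ht₀pos (by linarith))
  have hH := log_norm_le_harnack (hΦ.1.mono hballΩ) (fun y hy => hΦ.2.1.mapsTo (hballΩ hy))
    (z := q t₀) (by rw [mem_ball, hqz t₀ (by linarith)]; nlinarith)
  rw [hqz t₀ (by linarith)] at hH
  have hlogle : Real.log ‖Φ (q t₀)‖ ≤ δ := by
    have h1 := Real.log_le_sub_one_of_pos (zero_lt_one.trans hq1)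
    linarith
  have hlog0 : 0 ≤ Real.log ‖Φ (q t₀)‖ := Real.log_nonneg hq1.le
  have h3 : t₀ * d * Real.log ‖Φ z‖ ≤ 2 * d * δ := by
    have h4 : (d + (1 - t₀) * d) * Real.log ‖Φ (q t₀)‖ ≤ 2 * d * δ := by
      apply mul_le_mul _ hlogle hlog0 (by positivity)
      nlinarith
    nlinarith
  rw [ht₀d] at h3
  have h5 : d ≤ K * min d s := by
    rcases le_total d s with h | h
    · rw [min_eq_left h]; nlinarith
    · rw [min_eq_right h]; linarith
  have h6 : min d s / 2 * Real.log ‖Φ z‖ ≤ min d s / 2 * (4 * K * δ) := by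
    have := mul_le_mul_of_nonneg_right h5 hδ.le
    nlinarith
  exact le_of_mul_le_mul_left h6 (by positivity)

theorem eventually_norm_eval_le_norm_extConformal_pow
    (hΦ : IsExtConformal (unboundedComponent Γ) Φ) {n : ℕ} {P : Polynomial ℂ}
    (hP : P.natDegree ≤ n) :
    ∃ B ≥ 0, ∀ᶠ z in cobounded ℂ, ‖P.eval z‖ ≤ B * ‖Φ z‖ ^ n := by
  obtain ⟨a, ha, hev⟩ := tendsto_norm_extConformal_cobounded hΦ
  refine ⟨(∑ i ∈ Finset.range (n + 1), ‖P.coeff i‖) * (1 / a) ^ n, by positivity, ?_⟩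
  filter_upwards [hev, (tendsto_norm_cobounded_atTop (E := ℂ)).eventually_ge_atTop 1] with z h1 h2
  rw [P.eval_eq_sum_range' (Nat.lt_succ_of_le hP)]
  have h3 : ‖z‖ ≤ 1 / a * ‖Φ z‖ := by
    rw [one_div, inv_mul_eq_div, le_div_iff₀ ha]; linarith
  calc ‖∑ i ∈ Finset.range (n + 1), P.coeff i * z ^ i‖
      ≤ ∑ i ∈ Finset.range (n + 1), ‖P.coeff i * z ^ i‖ := norm_sum_le _ _
    _ ≤ ∑ i ∈ Finset.range (n + 1), ‖P.coeff i‖ * ‖z‖ ^ n := by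
        refine Finset.sum_le_sum fun i hi => ?_
        rw [norm_mul, norm_pow]
        gcongr
        exact Nat.lt_succ_iff.1 (Finset.mem_range.1 hi)
    _ = (∑ i ∈ Finset.range (n + 1), ‖P.coeff i‖) * ‖z‖ ^ n := by rw [Finset.sum_mul]
    _ ≤ (∑ i ∈ Finset.range (n + 1), ‖P.coeff i‖) * (1 / a * ‖Φ z‖) ^ n := by gcongr
    _ = _ := by rw [mul_pow]; ring

end UnboundedComponent

theorem ofReal_dist_le_hausdorffMeasure {J : Set ℂ} (hJ : IsPreconnected J) {x y : ℂ}
    (hx : x ∈ J) (hy : y ∈ J) : ENNReal.ofReal (dist x y) ≤ μH[1] J := by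
  have h1 := (LipschitzWith.dist_left x).hausdorffMeasure_image_le zero_le_one J
  rw [hausdorffMeasure_real] at h1
  have h2 : Icc 0 (dist x y) ⊆ (fun z => dist z x) '' J := by
    refine (hJ.image _ (by fun_prop)).Icc_subset ⟨x, hx, dist_self x⟩ ⟨y, hy, dist_comm y x⟩
  calc ENNReal.ofReal (dist x y) = volume (Icc 0 (dist x y)) := by rw [Real.volume_Icc, sub_zero]
    _ ≤ _ := measure_mono h2
    _ ≤ _ := h1
    _ = _ := by simp

/-- `β` is a `T`-periodic parametrization of the closed curve `Γ`, injective modulo periods. -/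
structure IsPeriodicParam (Γ : Set ℂ) (T : ℝ) (β : ℝ → ℂ) : Prop where
  pos : 0 < T
  continuous : Continuous β
  range_eq : range β = Γ
  eq_iff : ∀ u v, β u = β v ↔ ∃ k : ℤ, u = v + k * T

theorem IsJordanCurve.exists_isPeriodicParam {Γ : Set ℂ} (h : IsJordanCurve Γ) :
    ∃ β, IsPeriodicParam Γ 1 β := by
  obtain ⟨γ, hc, hi, rfl⟩ := h
  have hm : ∀ t : ℝ, Complex.exp (2 * Real.pi * t * I) ∈ sphere (0 : ℂ) 1 := by
    intro t
    rw [mem_sphere_zero_iff_norm]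
    have := Complex.norm_exp_ofReal_mul_I (2 * Real.pi * t)
    push_cast at this
    exact this
  refine ⟨fun t => γ (Complex.exp (2 * Real.pi * t * I)), one_pos, ?_, ?_, ?_⟩
  · exact hc.comp_continuous (by fun_prop) hm
  · ext z
    constructor
    · rintro ⟨t, rfl⟩; exact ⟨_, hm t, rfl⟩
    · rintro ⟨w, hw, rfl⟩
      refine ⟨Complex.arg w / (2 * Real.pi), ?_⟩
      have hpi := Real.pi_pos.ne'
      have h1 : (2 * Real.pi * ((Complex.arg w / (2 * Real.pi) : ℝ) : ℂ) * I) = arg w * I := by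
        push_cast
        have : (Real.pi : ℂ) ≠ 0 := by exact_mod_cast hpi
        field_simp
      have h2 := Complex.norm_mul_exp_arg_mul_I w
      rw [mem_sphere_zero_iff_norm.1 hw] at h2
      simp only [h1]
      congr 1
      simpa using h2
  · intro u v
    have hpi : (2 * Real.pi * I : ℂ) ≠ 0 := Complex.two_pi_I_ne_zero
    constructor
    · intro huv
      obtain ⟨k, hk⟩ := Complex.exp_eq_exp_iff_exists_int.1 (hi (hm u) (hm v) huv)
      refine ⟨k, ?_⟩
      have : (2 * Real.pi * I : ℂ) * u = (2 * Real.pi * I) * (v + k) := by linear_combination hk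
      have := mul_left_cancel₀ hpi this
      rw [mul_one]
      exact_mod_cast this
    · rintro ⟨k, rfl⟩
      have : Complex.exp (2 * Real.pi * ((v + k * 1 : ℝ) : ℂ) * I) =
          Complex.exp (2 * Real.pi * v * I) := by
        refine Complex.exp_eq_exp_iff_exists_int.2 ⟨k, ?_⟩
        push_cast; ring
      simp only [this]

namespace IsPeriodicParam

variable {Γ : Set ℂ} {T : ℝ} {β : ℝ → ℂ}

theorem apply_add_int (h : IsPeriodicParam Γ T β) (t : ℝ) (k : ℤ) : β (t + k * T) = β t :=
  (h.eq_iff _ _).2 ⟨k, rfl⟩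

theorem mem (h : IsPeriodicParam Γ T β) (t : ℝ) : β t ∈ Γ := h.range_eq ▸ mem_range_self t

theorem exists_int_mem_Ico (h : IsPeriodicParam Γ T β) (a v : ℝ) :
    ∃ k : ℤ, v + k * T ∈ Ico a (a + T) := by
  obtain ⟨k, hk, -⟩ := existsUnique_add_zsmul_mem_Ico h.pos v a
  exact ⟨k, by simpa using hk⟩

theorem exists_mem_Ico (h : IsPeriodicParam Γ T β) (a : ℝ) {ζ : ℂ} (hζ : ζ ∈ Γ) :
    ∃ v ∈ Ico a (a + T), β v = ζ := by
  rw [← h.range_eq] at hζ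
  obtain ⟨v, rfl⟩ := hζ
  obtain ⟨k, hk⟩ := h.exists_int_mem_Ico a v
  exact ⟨_, hk, h.apply_add_int v k⟩

theorem injOn (h : IsPeriodicParam Γ T β) (a : ℝ) : InjOn β (Ico a (a + T)) := by
  intro u hu v hv huv
  obtain ⟨k, hk⟩ := (h.eq_iff _ _).1 huv
  have hT := h.pos
  have h1 : (k : ℝ) < 1 := by
    by_contra! hc
    nlinarith [hu.2, hv.1]
  have h2 : (-1 : ℝ) < k := by
    by_contra! hc
    nlinarith [hu.1, hv.2]
  have : k = 0 := by
    have : k < 1 := by exact_mod_cast h1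
    have : -1 < k := by exact_mod_cast h2
    omega
  simpa [this] using hk

theorem image_Icc_eq (h : IsPeriodicParam Γ T β) {a b : ℝ} (hab : a + T ≤ b) :
    β '' Icc a b = Γ := by
  apply Subset.antisymm
  · rintro _ ⟨t, -, rfl⟩; exact h.mem t
  · intro ζ hζ
    obtain ⟨v, hv, rfl⟩ := h.exists_mem_Ico a hζ
    exact ⟨v, ⟨hv.1, by linarith [hv.2]⟩, rfl⟩

theorem image_Icc_union (h : IsPeriodicParam Γ T β) (a b : ℝ) :
    Γ ⊆ β '' Icc a b ∪ β '' Icc b (a + T) := by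
  intro ζ hζ
  obtain ⟨v, hv, rfl⟩ := h.exists_mem_Ico a hζ
  rcases le_total v b with h1 | h1
  · exact Or.inl ⟨v, ⟨hv.1, h1⟩, rfl⟩
  · exact Or.inr ⟨v, ⟨h1, hv.2.le⟩, rfl⟩

theorem isCompact_image (h : IsPeriodicParam Γ T β) (a b : ℝ) : IsCompact (β '' Icc a b) :=
  isCompact_Icc.image h.continuous

theorem isCompact (h : IsPeriodicParam Γ T β) : IsCompact Γ := by
  rw [← h.image_Icc_eq (le_refl (0 + T))]
  exact h.isCompact_image _ _

theorem isPreconnected_image (h : IsPeriodicParam Γ T β) (a b : ℝ) :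
    IsPreconnected (β '' Icc a b) :=
  isPreconnected_Icc.image _ h.continuous.continuousOn

theorem isSubarc_image (h : IsPeriodicParam Γ T β) (a b : ℝ) : IsSubarc Γ (β '' Icc a b) :=
  ⟨by rintro _ ⟨t, -, rfl⟩; exact h.mem t, (h.isCompact_image a b).isClosed,
    h.isPreconnected_image a b⟩

theorem image_subset_or (h : IsPeriodicParam Γ T β) {J : Set ℂ} (hJΓ : J ⊆ Γ)
    (hJ : IsPreconnected J) {a b : ℝ} (ha : β a ∈ J) (hb : β b ∈ J) :
    β '' Icc a b ⊆ J ∨ β '' Icc b (a + T) ⊆ J := by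
  by_contra! hcon
  obtain ⟨h1, h2⟩ := hcon
  rw [Set.not_subset] at h1 h2
  obtain ⟨_, ⟨c, hc, rfl⟩, hcJ⟩ := h1
  obtain ⟨_, ⟨d, hd, rfl⟩, hdJ⟩ := h2
  have haT : β (a + T) = β a := by simpa using h.apply_add_int a 1
  have hcT : β (c + T) = β c := by simpa using h.apply_add_int c 1
  have hac : a ≠ c := fun e => hcJ (e ▸ ha)
  have hdT : d ≠ a + T := fun e => hdJ (by rw [e, haT]; exact ha)
  have hdT' : d < a + T := lt_of_le_of_ne hd.2 hdT
  have hac' : a < c := lt_of_le_of_ne hc.1 hac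
  obtain ⟨z, hz, ⟨u, hu, huz⟩, ⟨v, hv, hvz⟩⟩ := isPreconnected_closed_iff.1 hJ _ _
    (h.isCompact_image c d).isClosed (h.isCompact_image d (c + T)).isClosed
    (hJΓ.trans (h.image_Icc_union c d)) ⟨β b, hb, b, ⟨hc.2, hd.1⟩, rfl⟩
    ⟨β a, ha, a + T, ⟨hd.2, by linarith⟩, haT⟩
  rcases hv.2.lt_or_eq with h3 | h3
  · have huv : u = v := h.injOn c ⟨hu.1, by linarith [hu.2]⟩
      ⟨(hc.2.trans hd.1).trans hv.1, h3⟩ (huz.trans hvz.symm)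
    have : u = d := le_antisymm hu.2 (huv ▸ hv.1)
    exact hdJ (by rw [← this, huz]; exact hz)
  · rw [h3, hcT] at hvz
    exact hcJ (hvz ▸ hz)

theorem min_hausdorffMeasure_le (h : IsPeriodicParam Γ T β) (a b : ℝ) :
    min (μH[1] (β '' Icc a b)) (μH[1] (β '' Icc b (a + T))) ≤
      shorterArcLength Γ (β a) (β b) := by
  refine le_iInf₂ fun J hJ => ?_
  rcases h.image_subset_or hJ.1.1 hJ.1.2.2 hJ.2.1 hJ.2.2 with h1 | h1
  · exact (min_le_left _ _).trans (measure_mono h1)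
  · exact (min_le_right _ _).trans (measure_mono h1)

theorem image_Icc_add_int (h : IsPeriodicParam Γ T β) (a b : ℝ) (k : ℤ) :
    β '' Icc (a + k * T) (b + k * T) = β '' Icc a b := by
  rw [← Set.image_add_const_Icc, ← Set.image_comp]
  congr 1
  ext t
  simp [h.apply_add_int]

theorem hausdorffMeasure_image_add (h : IsPeriodicParam Γ T β) {a b c : ℝ} (hac : a ≤ c)
    (hcb : c ≤ b) (hba : b ≤ a + T) :
    μH[1] (β '' Icc a b) = μH[1] (β '' Icc a c) + μH[1] (β '' Icc c b) := by
  rw [← Icc_union_Icc_eq_Icc hac hcb, image_union]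
  have := Measure.nullSingletonClass_hausdorff ℂ one_pos
  refine measure_union₀ (h.isCompact_image c b).measurableSet.nullMeasurableSet ?_
  refine measure_mono_null (t := {β a, β c}) ?_ ((Set.toFinite _).measure_zero _)
  rintro z ⟨⟨u, hu, rfl⟩, ⟨v, hv, huv⟩⟩
  rcases (hv.2.trans hba).lt_or_eq with h3 | h3
  · have h4 : v = u := h.injOn a ⟨hac.trans hv.1, h3⟩
      ⟨hu.1, lt_of_le_of_lt (hu.2.trans hv.1) h3⟩ huv
    have : u = c := le_antisymm hu.2 (h4 ▸ hv.1)
    exact Or.inr (by rw [mem_singleton_iff, this])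
  · left
    rw [← huv, h3]
    simpa using h.apply_add_int a 1

theorem exists_hausdorffMeasure_le (h : IsPeriodicParam Γ T β) {Λ : ℝ}
    (hq : IsQuasismooth Γ Λ) : ∃ η > 0, ∀ a b, a ≤ b → b ≤ a + η →
      μH[1] (β '' Icc a b) ≤ ENNReal.ofReal (Λ * dist (β a) (β b)) := by
  have hT := h.pos
  have hc := h.continuous
  obtain ⟨x₀, -, hx₀⟩ := (isCompact_Icc (a := (0 : ℝ)) (b := T)).exists_isMinOn
    (nonempty_Icc.2 hT.le) (f := fun a => dist (β (a + T / 3)) (β (a + 2 * T / 3)))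
    (by fun_prop)
  set D := dist (β (x₀ + T / 3)) (β (x₀ + 2 * T / 3)) with hD
  have hDpos : 0 < D := by
    refine dist_pos.2 fun he => ?_
    have := h.injOn x₀ ⟨by linarith, by linarith⟩ ⟨by linarith, by linarith⟩ he
    linarith
  have hΛ : 0 < Λ := zero_lt_one.trans_le hq.1
  have huc := (isCompact_Icc (a := (0 : ℝ)) (b := 2 * T)).uniformContinuousOn_of_continuous
    hc.continuousOn
  rw [Metric.uniformContinuousOn_iff] at huc
  obtain ⟨η, hη, hηc⟩ := huc (D / Λ) (by positivity)
  have key : ∀ a b, 0 ≤ a → a ≤ T → a ≤ b → b ≤ a + min (η / 2) (T / 3) →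
      μH[1] (β '' Icc a b) ≤ ENNReal.ofReal (Λ * dist (β a) (β b)) := by
    intro a b ha haT hab hb
    have hb1 := hb.trans (add_le_add le_rfl (min_le_left _ _))
    have hb2 := hb.trans (add_le_add le_rfl (min_le_right _ _))
    have h1 := (h.min_hausdorffMeasure_le a b).trans (hq.2 _ (h.mem a) _ (h.mem b))
    rcases min_le_iff.1 h1 with h2 | h2
    · exact h2
    · exfalso
      have h3 : ENNReal.ofReal D ≤ μH[1] (β '' Icc b (a + T)) := by
        refine (ENNReal.ofReal_le_ofReal (hx₀ ⟨ha, haT⟩)).trans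
          (ofReal_dist_le_hausdorffMeasure (h.isPreconnected_image _ _) ?_ ?_)
        · exact ⟨_, ⟨by linarith, by linarith⟩, rfl⟩
        · exact ⟨_, ⟨by linarith, by linarith⟩, rfl⟩
      have h4 := (ENNReal.ofReal_le_ofReal_iff (by positivity)).1 (h3.trans h2)
      have h5 := hηc a ⟨ha, by linarith⟩ b ⟨by linarith, by linarith⟩
        (by rw [Real.dist_eq, abs_lt]; constructor <;> linarith)
      rw [lt_div_iff₀ hΛ] at h5
      linarith
  refine ⟨min (η / 2) (T / 3), by positivity, fun a b hab hb => ?_⟩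
  obtain ⟨k, hk⟩ := h.exists_int_mem_Ico 0 a
  have := key (a + k * T) (b + k * T) hk.1 (by linarith [hk.2]) (by linarith) (by linarith)
  rwa [h.image_Icc_add_int, h.apply_add_int, h.apply_add_int] at this

theorem hausdorffMeasure_lt_top (h : IsPeriodicParam Γ T β) {Λ : ℝ}
    (hq : IsQuasismooth Γ Λ) : μH[1] Γ < ⊤ := by
  obtain ⟨η, hη, hle⟩ := h.exists_hausdorffMeasure_le hq
  have key : ∀ k : ℕ, μH[1] (β '' Icc 0 (k * η)) < ⊤ := by
    intro k
    induction k with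
    | zero =>
      have := Measure.nullSingletonClass_hausdorff ℂ one_pos
      simp
    | succ k ih =>
      have h1 : (0 : ℝ) ≤ k * η := by positivity
      have h2 : (k : ℝ) * η ≤ (k + 1 : ℕ) * η := by push_cast; nlinarith
      rw [← Icc_union_Icc_eq_Icc h1 h2, image_union]
      refine (measure_union_le _ _).trans_lt (ENNReal.add_lt_top.2 ⟨ih, ?_⟩)
      exact (hle _ _ h2 (by push_cast; linarith)).trans_lt ENNReal.ofReal_lt_top
  obtain ⟨k, hk⟩ := exists_nat_ge (T / η)
  rw [div_le_iff₀ hη] at hk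
  have := key k
  rwa [h.image_Icc_eq (by linarith)] at this

end IsPeriodicParam

namespace IsPeriodicParam

variable {Γ : Set ℂ} {T : ℝ} {β : ℝ → ℂ}

/-- The signed length of the curve between the parameters `0` and `t`. -/
def arcLength (β : ℝ → ℂ) (t : ℝ) : ℝ :=
  ⌊t⌋ * (μH[1] (β '' Icc 0 1)).toReal + (μH[1] (β '' Icc 0 (Int.fract t))).toReal

theorem arcLength_add_int (β : ℝ → ℂ) (t : ℝ) (k : ℤ) :
    arcLength β (t + k) = arcLength β t + k * (μH[1] (β '' Icc 0 1)).toReal := by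
  simp only [arcLength, Int.floor_add_intCast, Int.fract_add_intCast]
  push_cast
  ring

theorem hausdorffMeasure_image_lt_top (h : IsPeriodicParam Γ T β) (hΓ : μH[1] Γ < ⊤) (a b : ℝ) :
    μH[1] (β '' Icc a b) < ⊤ :=
  (measure_mono (h.isSubarc_image a b).1).trans_lt hΓ

theorem arcLength_sub (h : IsPeriodicParam Γ 1 β) (hΓ : μH[1] Γ < ⊤) {a b : ℝ} (hab : a ≤ b)
    (hba : b ≤ a + 1) : arcLength β b - arcLength β a = (μH[1] (β '' Icc a b)).toReal := by
  have hadd : ∀ {a c b : ℝ}, a ≤ c → c ≤ b → b ≤ a + 1 → (μH[1] (β '' Icc a b)).toReal =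
      (μH[1] (β '' Icc a c)).toReal + (μH[1] (β '' Icc c b)).toReal := by
    intro a c b h1 h2 h3
    rw [h.hausdorffMeasure_image_add h1 h2 h3, ENNReal.toReal_add
      (h.hausdorffMeasure_image_lt_top hΓ _ _).ne (h.hausdorffMeasure_image_lt_top hΓ _ _).ne]
  have key : ∀ a b : ℝ, 0 ≤ a → a < 1 → a ≤ b → b ≤ a + 1 →
      arcLength β b - arcLength β a = (μH[1] (β '' Icc a b)).toReal := by
    intro a b ha ha1 hab hba
    have hfa : arcLength β a = (μH[1] (β '' Icc 0 a)).toReal := by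
      simp [arcLength, Int.floor_eq_zero_iff.2 ⟨ha, ha1⟩, Int.fract_eq_self.2 ⟨ha, ha1⟩]
    rcases lt_or_ge b 1 with hb | hb
    · have hfb : arcLength β b = (μH[1] (β '' Icc 0 b)).toReal := by
        simp [arcLength, Int.floor_eq_zero_iff.2 ⟨ha.trans hab, hb⟩,
          Int.fract_eq_self.2 ⟨ha.trans hab, hb⟩]
      rw [hfa, hfb, hadd ha hab (by linarith)]
      ring
    · have h1 := arcLength_add_int β (b - 1) 1
      have hfb : arcLength β (b - 1) = (μH[1] (β '' Icc 0 (b - 1))).toReal := by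
        have : b - 1 ∈ Ico (0 : ℝ) 1 := ⟨by linarith, by linarith⟩
        simp [arcLength, Int.floor_eq_zero_iff.2 this, Int.fract_eq_self.2 this]
      have h2 := h.image_Icc_add_int 0 (b - 1) 1
      simp only [Int.cast_one, one_mul, zero_add, sub_add_cancel, mul_one] at h1 h2
      have h3 := hadd ha1.le hb hba
      have h4 := hadd ha ha1.le (by linarith)
      rw [h1, hfa, hfb, ← h2]
      linarith
  obtain ⟨k, hk⟩ := h.exists_int_mem_Ico 0 a
  rw [mul_one] at hk
  have := key (a + k) (b + k) hk.1 (by linarith [hk.2]) (by linarith) (by linarith)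
  rw [arcLength_add_int, arcLength_add_int] at this
  have h2 := h.image_Icc_add_int a b k
  rw [mul_one] at h2
  rw [h2] at this
  linarith

theorem continuous_arcLength (h : IsPeriodicParam Γ 1 β) {Λ : ℝ} (hq : IsQuasismooth Γ Λ) :
    Continuous (arcLength β) := by
  have hΓ := h.hausdorffMeasure_lt_top hq
  obtain ⟨η, hη, hle⟩ := h.exists_hausdorffMeasure_le hq
  have hΛ : 0 < Λ := zero_lt_one.trans_le hq.1
  have key : ∀ a b, a ≤ b → b ≤ a + min η 1 →
      |arcLength β b - arcLength β a| ≤ Λ * dist (β b) (β a) := by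
    intro a b hab hb
    rw [h.arcLength_sub hΓ hab (hb.trans (add_le_add le_rfl (min_le_right _ _))),
      abs_of_nonneg ENNReal.toReal_nonneg, dist_comm]
    exact ENNReal.toReal_le_of_le_ofReal (by positivity)
      (hle a b hab (hb.trans (add_le_add le_rfl (min_le_left _ _))))
  rw [continuous_iff_continuousAt]
  intro t
  rw [ContinuousAt, tendsto_iff_dist_tendsto_zero]
  have h0 : Tendsto (fun u => Λ * dist (β u) (β t)) (𝓝 t) (𝓝 0) := by
    have : ContinuousAt (fun u => Λ * dist (β u) (β t)) t := by
      have := h.continuous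
      fun_prop
    simpa [ContinuousAt] using this
  refine squeeze_zero' (Eventually.of_forall fun _ => dist_nonneg) ?_ h0
  have hη1 : 0 < min η 1 := by positivity
  filter_upwards [ball_mem_nhds t hη1] with u hu
  rw [mem_ball, Real.dist_eq, abs_lt] at hu
  rw [Real.dist_eq]
  rcases le_total u t with hut | hut
  · rw [abs_sub_comm, dist_comm (β u)]
    exact key u t hut (by linarith)
  · exact key t u hut (by linarith)

theorem strictMono_arcLength (h : IsPeriodicParam Γ 1 β) (hΓ : μH[1] Γ < ⊤) :
    StrictMono (arcLength β) := by
  have key : ∀ a b, a < b → b < a + 1 → arcLength β a < arcLength β b := by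
    intro a b hab hb
    rw [← sub_pos, h.arcLength_sub hΓ hab.le hb.le]
    have h1 := ofReal_dist_le_hausdorffMeasure (h.isPreconnected_image a b)
      (mem_image_of_mem β (left_mem_Icc.2 hab.le)) (mem_image_of_mem β (right_mem_Icc.2 hab.le))
    refine ENNReal.toReal_pos (fun h0 => ?_) (h.hausdorffMeasure_image_lt_top hΓ _ _).ne
    rw [h0, nonpos_iff_eq_zero, ENNReal.ofReal_eq_zero] at h1
    have := h.injOn a ⟨le_rfl, by linarith⟩ ⟨hab.le, hb⟩ (dist_le_zero.1 h1)
    exact hab.ne this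
  intro a b hab
  have hL : 0 < (μH[1] (β '' Icc 0 1)).toReal := by
    have h1 := key 0 (1 / 2) (by norm_num) (by norm_num)
    have h2 := key (1 / 2) 1 (by norm_num) (by norm_num)
    have h3 := arcLength_add_int β 0 1
    simp only [Int.cast_one, zero_add, one_mul] at h3
    linarith
  rcases lt_or_ge b (a + 1) with hb | hb
  · exact key a b hab hb
  · have h1 := arcLength_add_int β (b - ⌊b - a⌋) ⌊b - a⌋
    rw [sub_add_cancel] at h1
    have h2 : (1 : ℝ) ≤ ⌊b - a⌋ := by
      exact_mod_cast Int.le_floor.2 (by push_cast; linarith)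
    have h3 := Int.floor_le (b - a)
    have h4 := Int.lt_floor_add_one (b - a)
    have h5 : arcLength β a ≤ arcLength β (b - ⌊b - a⌋) := by
      rcases (show a ≤ b - ⌊b - a⌋ by linarith).lt_or_eq with h6 | h6
      · exact (key _ _ h6 (by linarith)).le
      · rw [← h6]
    nlinarith

theorem surjective_arcLength (h : IsPeriodicParam Γ 1 β) {Λ : ℝ} (hq : IsQuasismooth Γ Λ) :
    Function.Surjective (arcLength β) := by
  have hΓ := h.hausdorffMeasure_lt_top hq
  have hmono := h.strictMono_arcLength hΓ
  have hL : 0 < (μH[1] (β '' Icc 0 1)).toReal := by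
    have h3 := arcLength_add_int β 0 1
    have := hmono one_pos
    simp only [Int.cast_one, zero_add, one_mul] at h3
    linarith
  refine (h.continuous_arcLength hq).surjective
    (tendsto_atTop_atTop_of_monotone hmono.monotone fun b => ?_)
    (tendsto_atBot_atBot_of_monotone hmono.monotone fun b => ?_)
  · refine ⟨0 + (⌈(b - arcLength β 0) / (μH[1] (β '' Icc 0 1)).toReal⌉ : ℤ), ?_⟩
    rw [arcLength_add_int]
    have := Int.le_ceil ((b - arcLength β 0) / (μH[1] (β '' Icc 0 1)).toReal)
    rw [div_le_iff₀ hL] at this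
    linarith
  · refine ⟨0 + (⌊(b - arcLength β 0) / (μH[1] (β '' Icc 0 1)).toReal⌋ : ℤ), ?_⟩
    rw [arcLength_add_int]
    have := Int.floor_le ((b - arcLength β 0) / (μH[1] (β '' Icc 0 1)).toReal)
    rw [le_div_iff₀ hL] at this
    linarith

end IsPeriodicParam

/-- `γ` is an arc-length parametrization, periodic with period `L`, of the quasismooth curve `Γ`
with constant `Λ`. -/
structure IsArcLengthParam (Γ : Set ℂ) (Λ L : ℝ) (γ : ℝ → ℂ) : Prop
    extends IsPeriodicParam Γ L γ where
  length_eq : ∀ a b, a ≤ b → b ≤ a + L → μH[1] (γ '' Icc a b) = ENNReal.ofReal (b - a)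
  exists_abs_sub_le : ∀ t, ∀ ζ ∈ Γ, ∃ t', γ t' = ζ ∧ |t - t'| ≤ Λ * dist (γ t) ζ

theorem IsJordanCurve.exists_isArcLengthParam {Γ : Set ℂ} {Λ : ℝ} (hJ : IsJordanCurve Γ)
    (hq : IsQuasismooth Γ Λ) : ∃ L γ, IsArcLengthParam Γ Λ L γ := by
  obtain ⟨β, h⟩ := hJ.exists_isPeriodicParam
  have hΓ := h.hausdorffMeasure_lt_top hq
  have hmono := h.strictMono_arcLength hΓ
  set F := IsPeriodicParam.arcLength β with hF
  set L := (μH[1] (β '' Icc 0 1)).toReal with hL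
  have hFint : ∀ (t : ℝ) (k : ℤ), F (t + k) = F t + k * L :=
    IsPeriodicParam.arcLength_add_int β
  have hFone : ∀ t, F (t + 1) = F t + L := fun t => by simpa using hFint t 1
  have hLpos : 0 < L := by
    have := hmono (show (0 : ℝ) < 0 + 1 by norm_num)
    linarith [hFone 0]
  let e := hmono.orderIsoOfSurjective F (h.surjective_arcLength hq)
  have heF : ∀ t, e t = F t := fun _ => rfl
  have hFe : ∀ t, F (e.symm t) = t := fun t => e.apply_symm_apply t
  have heL : ∀ (t : ℝ) (k : ℤ), e.symm (t + k * L) = e.symm t + k := by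
    intro t k
    rw [OrderIso.symm_apply_eq, heF, hFint, hFe]
  have hΛ : 0 < Λ := zero_lt_one.trans_le hq.1
  have hdist : ∀ {a b : ℝ}, a ≤ b → b ≤ a + 1 →
      μH[1] (β '' Icc a b) = ENNReal.ofReal (F b - F a) := by
    intro a b hab hb
    rw [h.arcLength_sub hΓ hab hb,
      ENNReal.ofReal_toReal (h.hausdorffMeasure_image_lt_top hΓ _ _).ne]
  refine ⟨L, β ∘ e.symm, ⟨hLpos, h.continuous.comp e.symm.continuous, ?_, ?_⟩, ?_, ?_⟩
  · rw [range_comp, e.symm.surjective.range_eq, image_univ, h.range_eq]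
  · intro u v
    rw [Function.comp_apply, Function.comp_apply, h.eq_iff]
    refine exists_congr fun k => ?_
    rw [mul_one, ← heL, e.symm.injective.eq_iff]
  · intro a b hab hb
    have h1 : e.symm a ≤ e.symm b := e.symm.monotone hab
    have h2 : e.symm b ≤ e.symm a + 1 := by
      have := heL a 1
      simp only [Int.cast_one, one_mul] at this
      rw [← this]
      exact e.symm.monotone hb
    rw [image_comp, OrderIso.image_Icc, hdist h1 h2, hFe, hFe]
  · intro t ζ hζ
    obtain ⟨v, hv, rfl⟩ := h.exists_mem_Ico (e.symm t) hζ
    have h1 := (h.min_hausdorffMeasure_le (e.symm t) v).trans (hq.2 _ (h.mem _) _ (h.mem _))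
    rw [hdist hv.1 hv.2.le, hdist hv.2.le (by linarith [hv.1])] at h1
    have hm1 := hmono.monotone hv.1
    have hm2 := hmono.monotone hv.2.le
    have hnn : 0 ≤ Λ * dist (β (e.symm t)) (β v) := by positivity
    rcases min_le_iff.1 h1 with h2 | h2
    · rw [ENNReal.ofReal_le_ofReal_iff hnn] at h2
      refine ⟨F v, ?_, ?_⟩
      · simp only [Function.comp_apply]
        rw [← heF, e.symm_apply_apply]
      · rw [hFe] at h2 hm1
        rw [abs_sub_comm, abs_of_nonneg (by linarith)]
        exact h2
    · rw [ENNReal.ofReal_le_ofReal_iff hnn] at h2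
      refine ⟨F (v + (-1 : ℤ)), ?_, ?_⟩
      · simp only [Function.comp_apply]
        rw [← heF, e.symm_apply_apply]
        have := h.apply_add_int v (-1)
        rwa [mul_one] at this
      · rw [hFone, hFe] at h2 hm2
        rw [hFint, abs_of_nonneg (by push_cast; linarith)]
        simp only [Function.comp_apply]
        push_cast; linarith

namespace IsArcLengthParam

variable {Γ : Set ℂ} {Λ L : ℝ} {γ : ℝ → ℂ}

theorem hausdorffMeasure_eq (h : IsArcLengthParam Γ Λ L γ) : μH[1] Γ = ENNReal.ofReal L := by
  have h1 := h.length_eq 0 (0 + L) (by linarith [h.pos]) le_rfl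
  rwa [h.image_Icc_eq le_rfl, zero_add, sub_zero] at h1

theorem hausdorffMeasure_image (h : IsArcLengthParam Γ Λ L γ) {a b : ℝ} (hab : a ≤ b) :
    μH[1] (γ '' Icc a b) = ENNReal.ofReal (min (b - a) L) := by
  rcases le_total (b - a) L with h1 | h1
  · rw [min_eq_left h1, h.length_eq a b hab (by linarith)]
  · rw [min_eq_right h1, h.image_Icc_eq (by linarith), h.hausdorffMeasure_eq]

theorem hausdorffMeasure_image_le (h : IsArcLengthParam Γ Λ L γ) {a b : ℝ} (hab : a ≤ b) :
    μH[1] (γ '' Icc a b) ≤ ENNReal.ofReal (b - a) := by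
  rw [h.hausdorffMeasure_image hab]
  exact ENNReal.ofReal_le_ofReal (min_le_left _ _)

theorem dist_le_sub (h : IsArcLengthParam Γ Λ L γ) {a b : ℝ} (hab : a ≤ b) :
    dist (γ a) (γ b) ≤ b - a := by
  have h1 := (ofReal_dist_le_hausdorffMeasure (h.isPreconnected_image a b)
    (mem_image_of_mem γ (left_mem_Icc.2 hab)) (mem_image_of_mem γ (right_mem_Icc.2 hab))).trans
    (h.hausdorffMeasure_image_le hab)
  exact (ENNReal.ofReal_le_ofReal_iff (by linarith)).1 h1

theorem dist_le_of_mem_image (h : IsArcLengthParam Γ Λ L γ) {a b : ℝ} {x y : ℂ}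
    (hx : x ∈ γ '' Icc a b) (hy : y ∈ γ '' Icc a b) : dist x y ≤ b - a := by
  obtain ⟨u, hu, rfl⟩ := hx
  obtain ⟨v, hv, rfl⟩ := hy
  rcases le_total u v with huv | huv
  · linarith [h.dist_le_sub huv, hu.1, hv.2]
  · rw [dist_comm]
    linarith [h.dist_le_sub huv, hv.1, hu.2]

theorem diam_le (h : IsArcLengthParam Γ Λ L γ) : diam Γ ≤ L := by
  refine diam_le_of_forall_dist_le h.pos.le fun x hx y hy => ?_
  rw [← h.image_Icc_eq (le_refl (0 + L))] at hx hy
  simpa using h.dist_le_of_mem_image hx hy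

theorem mem_image_of_dist_le (h : IsArcLengthParam Γ Λ L γ) (hΛ : 0 ≤ Λ) {t r : ℝ} {ζ : ℂ}
    (hζ : ζ ∈ Γ) (hr : dist (γ t) ζ ≤ r) : ζ ∈ γ '' Icc (t - Λ * r) (t + Λ * r) := by
  obtain ⟨t', rfl, ht'⟩ := h.exists_abs_sub_le t ζ hζ
  have h1 := abs_le.1 (ht'.trans (mul_le_mul_of_nonneg_left hr hΛ))
  exact ⟨t', ⟨by linarith, by linarith⟩, rfl⟩

theorem hausdorffMeasure_inter_ball_le (h : IsArcLengthParam Γ Λ L γ) (hΛ : 0 ≤ Λ) (z : ℂ)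
    {r : ℝ} (hr : 0 < r) : μH[1] (Γ ∩ ball z r) ≤ ENNReal.ofReal (4 * Λ * r) := by
  rcases (Γ ∩ ball z r).eq_empty_or_nonempty with he | ⟨ζ, hζ, hζr⟩
  · simp [he]
  · rw [← h.range_eq] at hζ
    obtain ⟨t, rfl⟩ := hζ
    have hsub : Γ ∩ ball z r ⊆ γ '' Icc (t - Λ * (2 * r)) (t + Λ * (2 * r)) := by
      rintro ξ ⟨hξ, hξr⟩
      refine h.mem_image_of_dist_le hΛ hξ ?_
      linarith [dist_triangle_right (γ t) ξ z, mem_ball.1 hξr, mem_ball.1 hζr]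
    refine (measure_mono hsub).trans ((h.hausdorffMeasure_image_le (by nlinarith)).trans ?_)
    exact ENNReal.ofReal_le_ofReal (by linarith)

theorem measurableSet_image_Ico (h : IsArcLengthParam Γ Λ L γ) {a b : ℝ} (hab : b ≤ a + L) :
    MeasurableSet (γ '' Ico a b) :=
  measurableSet_Ico.image_of_continuousOn_injOn h.continuous.continuousOn
    ((h.injOn a).mono (Ico_subset_Ico_right hab))

theorem measure_image_two_mul_le (h : IsArcLengthParam Γ Λ L γ) {ν : Measure ℂ} {lam : ℝ}
    (hν : IsAInftyMeasure Γ ν lam) (t : ℝ) {r : ℝ} (hr : 0 ≤ r) :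
    ν (γ '' Icc (t - 2 * r) (t + 2 * r)) ≤
      ENNReal.ofReal lam * ν (γ '' Icc (t - r) (t + r)) := by
  refine hν.2 _ _ (h.isSubarc_image _ _) (image_mono (Icc_subset_Icc (by linarith) (by linarith)))
    (h.isCompact_image _ _).measurableSet ?_
  rw [h.hausdorffMeasure_image (by linarith), h.hausdorffMeasure_image (by linarith),
    ← ENNReal.ofReal_ofNat 2, ← ENNReal.ofReal_mul zero_le_two]
  refine ENNReal.ofReal_le_ofReal ?_
  have hL := h.pos
  rcases le_total (t + r - (t - r)) L with h1 | h1
  · rw [min_eq_left h1]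
    exact (min_le_left _ _).trans (by linarith)
  · rw [min_eq_right h1]
    exact (min_le_right _ _).trans (by linarith)

theorem measure_image_two_pow_mul_le (h : IsArcLengthParam Γ Λ L γ) {ν : Measure ℂ} {lam : ℝ}
    (hν : IsAInftyMeasure Γ ν lam) (t : ℝ) {r : ℝ} (hr : 0 ≤ r) (i : ℕ) :
    ν (γ '' Icc (t - 2 ^ i * r) (t + 2 ^ i * r)) ≤
      ENNReal.ofReal lam ^ i * ν (γ '' Icc (t - r) (t + r)) := by
  induction i with
  | zero => simp
  | succ i ih =>
    have h1 := h.measure_image_two_mul_le hν t (r := 2 ^ i * r) (by positivity)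
    rw [pow_succ', pow_succ', mul_assoc, mul_assoc]
    exact h1.trans (mul_le_mul_right ih _)

end IsArcLengthParam

theorem div_pow_le_exp_logPot_le {μ : Measure ℂ} [IsFiniteMeasure μ] {C : ℝ} (hC : 0 ≤ C)
    (hμ : ∀ z : ℂ, ∀ r > 0, μ (ball z r) ≤ ENNReal.ofReal (C * r)) {J : Set ℂ}
    (hJ : IsCompact J) (hJμ : ∀ᵐ w ∂μ, w ∈ J) {ℓ : ℝ} (hℓ : 0 < ℓ) (hμℓ : μ.real univ = ℓ)
    {ζ₀ : ℂ} (hdiam : ∀ w ∈ J, dist w ζ₀ ≤ ℓ) (A : ℕ) (z : ℂ) :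
    1 / (1 + dist z ζ₀ / ℓ) ^ A ≤ Real.exp (-(A / ℓ * logPot μ ℓ z)) ∧
      Real.exp (-(A / ℓ * logPot μ ℓ z)) ≤
        Real.exp (A * (Real.log 3 + 2 * C)) / (1 + dist z ζ₀ / ℓ) ^ A := by
  set D := 1 + dist z ζ₀ / ℓ with hD
  have hDpos : 1 ≤ D := by rw [hD]; linarith [show 0 ≤ dist z ζ₀ / ℓ by positivity]
  have hD0 : 0 < D := by linarith
  have hup := logPot_le hC hμ hJ.isBounded hJμ z hℓ (b := Real.log D) (by
    intro w hw
    rcases (norm_nonneg (z - w)).eq_or_lt' with h0 | h0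
    · rw [h0]; simpa using Real.log_nonneg hDpos
    · refine Real.log_le_log (by positivity) ?_
      rw [hD, div_le_iff₀ hℓ, add_mul, div_mul_cancel₀ _ hℓ.ne', one_mul, ← dist_eq_norm]
      linarith [dist_triangle_right z w ζ₀, hdiam w hw])
  have hlow := le_logPot hC hμ hJ.isBounded hJμ z hℓ (b := Real.log D - Real.log 3) (by
    intro w hw hwz
    have h0 : 0 < ‖z - w‖ := norm_pos_iff.2 (sub_ne_zero.2 hwz.symm)
    have h1 : Real.log (ℓ / ‖z - w‖) = -Real.log (‖z - w‖ / ℓ) := by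
      rw [← Real.log_inv, inv_div]
    have h2 : D ≤ 2 + ‖z - w‖ / ℓ := by
      have : dist z ζ₀ ≤ ‖z - w‖ + ℓ := by
        rw [← dist_eq_norm]; linarith [dist_triangle z w ζ₀, hdiam w hw]
      have := div_le_div_of_nonneg_right this hℓ.le
      rw [add_div, div_self hℓ.ne'] at this
      linarith
    rw [h1, ← Real.log_div hD0.ne' (by norm_num)]
    set x := ‖z - w‖ / ℓ with hx
    have hx0 : 0 < x := by positivity
    rcases le_total x 1 with h3 | h3
    · refine (Real.log_nonpos (by positivity) ?_).trans ?_
      · rw [div_le_one (by norm_num)]; linarith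
      · linarith [le_max_left (-Real.log x) 0]
    · refine (Real.log_le_log (y := x) (by positivity) ?_).trans ?_
      · rw [div_le_iff₀ (by norm_num)]; linarith
      · linarith [le_max_right (-Real.log x) 0])
  rw [hμℓ] at hup hlow
  have hpow : D ^ A = Real.exp (A * Real.log D) := by
    rw [mul_comm, Real.exp_mul, Real.exp_log hD0, Real.rpow_natCast]
  rw [hpow, one_div, ← Real.exp_neg, ← Real.exp_sub]
  have hA : (0 : ℝ) ≤ A / ℓ := by positivity
  constructor
  · refine Real.exp_le_exp.2 (neg_le_neg ?_)
    calc A / ℓ * logPot μ ℓ z ≤ A / ℓ * (Real.log D * ℓ) := by gcongr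
      _ = A * Real.log D := by field_simp
  · refine Real.exp_le_exp.2 ?_
    have : A / ℓ * ((Real.log D - Real.log 3) * ℓ - 2 * C * ℓ) ≤ A / ℓ * logPot μ ℓ z := by
      gcongr
    have h2 : A / ℓ * ((Real.log D - Real.log 3) * ℓ - 2 * C * ℓ) =
      A * Real.log D - A * (Real.log 3 + 2 * C) := by field_simp; ring
    linarith

/-- A polynomial with at most polynomial growth on `Γ` relative to its value at `ζ₀` satisfies a
corresponding bound in the whole plane. -/
theorem norm_eval_le_of_growth_on {Γ : Set ℂ} (hΓ : IsCompact Γ) {Φ : ℂ → ℂ}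
    (hΦ : IsExtConformal (unboundedComponent Γ) Φ) {n : ℕ} {P : Polynomial ℂ}
    (hP : P.natDegree ≤ n) {μ : Measure ℂ} [IsFiniteMeasure μ] {C : ℝ} (hC : 0 ≤ C)
    (hμ : ∀ z : ℂ, ∀ r > 0, μ (ball z r) ≤ ENNReal.ofReal (C * r)) {J : Set ℂ}
    (hJ : IsCompact J) (hJΓ : J ⊆ Γ) (hJμ : ∀ᵐ w ∂μ, w ∈ J) {ℓ : ℝ} (hℓ : 0 < ℓ)
    (hμℓ : μ.real univ = ℓ) {ζ₀ : ℂ} (hdiam : ∀ w ∈ J, dist w ζ₀ ≤ ℓ) {A : ℕ} (hA : A ≠ 0)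
    (hgood : ∀ ξ ∈ Γ, ‖P.eval ξ‖ ≤ ‖P.eval ζ₀‖ * (1 + dist ξ ζ₀ / ℓ) ^ A) {z : ℂ} (hz : z ∉ Γ)
    {K : ℝ} (hK : 1 ≤ K) (hzK : z ∈ unboundedComponent Γ → ‖Φ z‖ ≤ K) :
    ‖P.eval z‖ ≤ ‖P.eval ζ₀‖ * Real.exp (A * (Real.log 3 + 2 * C)) *
      (1 + dist z ζ₀ / ℓ) ^ A * K ^ n := by
  classical
  set Ω := unboundedComponent Γ with hΩ
  have hΩo : IsOpen Ω := isOpen_unboundedComponent hΓ.isClosed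
  have hΦ1 : ∀ y ∈ Ω, 1 < ‖Φ y‖ := fun y hy => hΦ.2.1.mapsTo hy
  set e : ℂ → ℝ := fun y => Real.exp (-(A / ℓ * logPot μ ℓ y)) with he
  set D : ℂ → ℝ := fun y => 1 + dist y ζ₀ / ℓ with hD
  have hD1 : ∀ y, 1 ≤ D y := fun y => by
    have : 0 ≤ dist y ζ₀ / ℓ := by positivity
    simp only [hD]; linarith
  have hDc : Continuous D := by fun_prop
  set M₀ := Real.exp (A * (Real.log 3 + 2 * C)) with hM₀
  have hM₀pos : 0 < M₀ := Real.exp_pos _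
  have heb : ∀ y, 1 / D y ^ A ≤ e y ∧ e y ≤ M₀ / D y ^ A := fun y =>
    div_pow_le_exp_logPot_le hC hμ hJ hJμ hℓ hμℓ hdiam A y
  have hepos : ∀ y, 0 < e y := fun y => Real.exp_pos _
  set h : ℂ → ℝ := fun y => if y ∈ Ω then ‖P.eval y‖ / ‖Φ y‖ ^ n * e y else ‖P.eval y‖ * e y
    with hh
  have hle : ∀ y, h y ≤ ‖P.eval y‖ * e y := by
    intro y
    simp only [hh]
    split_ifs with hy
    · refine mul_le_mul_of_nonneg_right (div_le_self (norm_nonneg _) ?_) (hepos y).le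
      exact one_le_pow₀ (hΦ1 y hy).le
    · exact le_rfl
  have hmain := le_of_locally_norm_analytic (U := Γᶜ) hΓ.isClosed.isOpen_compl (h := h)
    (M := ‖P.eval ζ₀‖ * M₀) ?_ ?_ ?_ z hz
  · have h1 : ‖P.eval z‖ * e z ≤ ‖P.eval ζ₀‖ * M₀ * K ^ n := by
      simp only [hh] at hmain
      split_ifs at hmain with hzΩ
      · have hpos : 0 < ‖Φ z‖ := zero_lt_one.trans (hΦ1 z hzΩ)
        rw [div_mul_eq_mul_div, div_le_iff₀ (by positivity)] at hmain
        refine hmain.trans ?_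
        have := hzK hzΩ
        gcongr
      · refine hmain.trans (le_mul_of_one_le_right (by positivity) (one_le_pow₀ hK))
    have hDz : 0 < D z ^ A := pow_pos (zero_lt_one.trans_le (hD1 z)) _
    have h2 : ‖P.eval z‖ * (1 / D z ^ A) ≤ ‖P.eval ζ₀‖ * M₀ * K ^ n :=
      (mul_le_mul_of_nonneg_left (heb z).1 (norm_nonneg _)).trans h1
    rw [mul_one_div, div_le_iff₀ hDz] at h2
    linarith
  · intro y hy
    obtain ⟨F, hF, hFe⟩ := exists_analyticAt_norm_eq_exp_logPot hC hμ hJ hJμ hℓ (A / ℓ)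
      (fun hyJ => hy (hJΓ hyJ))
    have hPa : AnalyticAt ℂ (fun x => P.eval x) y :=
      (Polynomial.differentiable P).analyticAt y
    by_cases hyΩ : y ∈ Ω
    · have hΦa : AnalyticAt ℂ Φ y := hΦ.1.analyticAt (hΩo.mem_nhds hyΩ)
      have hne : Φ y ^ n ≠ 0 :=
        pow_ne_zero _ (norm_pos_iff.1 (zero_lt_one.trans (hΦ1 y hyΩ)))
      refine ⟨fun x => P.eval x / Φ x ^ n * F x, (hPa.div (hΦa.pow n) hne).mul hF, ?_⟩
      filter_upwards [hFe, hΩo.mem_nhds hyΩ] with x hx hxΩ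
      simp only [hh, if_pos hxΩ, he, norm_mul, norm_div, norm_pow, hx]
    · refine ⟨fun x => P.eval x * F x, hPa.mul hF, ?_⟩
      filter_upwards [hFe, (isOpen_compl_diff_unboundedComponent hΓ.isClosed).mem_nhds
        ⟨hy, hyΩ⟩] with x hx hxΩ
      have hxn : x ∉ Ω := hxΩ.2
      simp only [hh, if_neg hxn, he, norm_mul, hx]
  · intro ζ hζ M' hM'
    have hζΓ : ζ ∈ Γ := by
      rw [frontier_compl] at hζ
      exact hΓ.isClosed.frontier_subset hζ
    have hcont : ContinuousAt (fun y => ‖P.eval y‖ * (M₀ / D y ^ A)) ζ := by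
      have hP : Continuous fun y => P.eval y := P.continuous
      refine ContinuousAt.mul (by fun_prop) (ContinuousAt.div (by fun_prop) (by fun_prop) ?_)
      exact (pow_pos (zero_lt_one.trans_le (hD1 ζ)) _).ne'
    have hval : ‖P.eval ζ‖ * (M₀ / D ζ ^ A) < M' := by
      refine lt_of_le_of_lt ?_ hM'
      have hDζ : 0 < D ζ ^ A := pow_pos (zero_lt_one.trans_le (hD1 ζ)) _
      rw [mul_div_assoc', div_le_iff₀ hDζ]
      nlinarith [hgood ζ hζΓ]
    filter_upwards [nhdsWithin_le_nhds (hcont.eventually (gt_mem_nhds hval))] with y hy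
    refine lt_of_le_of_lt ((hle y).trans ?_) hy
    exact mul_le_mul_of_nonneg_left (heb y).2 (norm_nonneg _)
  · intro M' hM'
    have hM'pos : 0 < M' := lt_of_le_of_lt (by positivity) hM'
    obtain ⟨B, hB, hev⟩ := eventually_norm_eval_le_norm_extConformal_pow hΦ hP
    obtain ⟨R, hR⟩ := hΓ.isBounded.subset_closedBall 0
    have hΓR : Γ ⊆ closedBall 0 (max R 0) := hR.trans (closedBall_subset_closedBall (le_max_left _ _))
    filter_upwards [hev, (tendsto_norm_cobounded_atTop (E := ℂ)).eventually_gt_atTop (max R 0),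
      (tendsto_dist_right_cobounded_atTop ζ₀).eventually_gt_atTop (B * M₀ / M' * ℓ)]
      with y hy hyR hyd _
    have hyΩ : y ∈ Ω := mem_unboundedComponent_of_subset_closedBall (le_max_right _ _) hΓR hyR
    have hpos : 0 < ‖Φ y‖ ^ n := pow_pos (zero_lt_one.trans (hΦ1 y hyΩ)) _
    simp only [hh, if_pos hyΩ]
    have h1 : ‖P.eval y‖ / ‖Φ y‖ ^ n ≤ B := by rwa [div_le_iff₀ hpos]
    have hDp : 0 < D y ^ A := pow_pos (zero_lt_one.trans_le (hD1 y)) _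
    have h2 : B * M₀ / M' < D y ^ A := by
      rw [← lt_div_iff₀ hℓ] at hyd
      refine lt_of_lt_of_le (hyd.trans ?_) (le_self_pow₀ (hD1 y) hA)
      simp only [hD]; linarith
    calc ‖P.eval y‖ / ‖Φ y‖ ^ n * e y ≤ B * (M₀ / D y ^ A) :=
          mul_le_mul h1 (heb y).2 (hepos y).le hB
      _ < M' := by
          rw [mul_div_assoc', div_lt_iff₀ hDp]
          rw [div_lt_iff₀ hM'pos] at h2
          linarith

theorem hausdorffMeasure_le_of_small_values {P : Polynomial ℂ} {ζ₀ : ℂ} {ℓ C N : ℝ} (hℓ : 0 < ℓ)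
    (hC : 0 ≤ C) (hN : 0 ≤ N) {S : Set ℂ} (hS : IsCompact S)
    (hSℓ : ∀ w ∈ S, dist w ζ₀ ≤ ℓ) (hSfin : μH[1] S < ⊤)
    (hgrow : ∀ z : ℂ, ∀ r > 0, μH[1] (S ∩ ball z r) ≤ ENNReal.ofReal (C * r))
    (hP : P.eval ζ₀ ≠ 0)
    (hup : ∀ z ∈ closedBall ζ₀ (4 * ℓ), ‖P.eval z‖ ≤ Real.exp N * ‖P.eval ζ₀‖)
    (hsmall : ∀ z ∈ S, ‖P.eval z‖ ≤ Real.exp (-(16 * C * (N + 1) + 1)) * ‖P.eval ζ₀‖) :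
    μH[1] S ≤ ENNReal.ofReal (ℓ / 4) := by
  by_contra! hlt
  set μ : Measure ℂ := (μH[1]).restrict S with hμdef
  have hfin : IsFiniteMeasure μ := ⟨by rwa [hμdef, Measure.restrict_apply_univ]⟩
  have hμ : ∀ z : ℂ, ∀ r > 0, μ (ball z r) ≤ ENNReal.ofReal (C * r) := by
    intro z r hr
    rw [hμdef, Measure.restrict_apply measurableSet_ball, inter_comm]
    exact hgrow z r hr
  have hSμ : ∀ᵐ w ∂μ, w ∈ S := ae_restrict_mem hS.measurableSet
  set m := μ.real univ with hm
  have hmℓ : ℓ / 4 ≤ m := by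
    rw [hm, Measure.real, hμdef, Measure.restrict_apply_univ]
    exact (ENNReal.ofReal_le_iff_le_toReal hSfin.ne).1 hlt.le
  set τ := 8 * (N + 1) with hτ
  have hτ0 : 0 ≤ τ / ℓ := by positivity
  have hP0 : 0 < ‖P.eval ζ₀‖ := norm_pos_iff.2 hP
  set e : ℂ → ℝ := fun y => Real.exp (-(τ / ℓ * logPot μ ℓ y)) with he
  have hepos : ∀ y, 0 < e y := fun y => Real.exp_pos _
  have he1 : ∀ y, e y ≤ Real.exp (16 * C * (N + 1)) := by
    intro y
    have h1 := le_logPot hC hμ hS.isBounded hSμ y hℓ (b := 0) (by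
      intro w _ _
      have h1 : Real.log (ℓ / ‖y - w‖) = -Real.log (‖y - w‖ / ℓ) := by
        rw [← Real.log_inv, inv_div]
      rw [h1]
      linarith [le_max_left (-Real.log (‖y - w‖ / ℓ)) 0])
    refine Real.exp_le_exp.2 ?_
    have h2 : τ / ℓ * (0 * m - 2 * C * ℓ) ≤ τ / ℓ * logPot μ ℓ y := by gcongr
    have h3 : τ / ℓ * (0 * m - 2 * C * ℓ) = -(16 * C * (N + 1)) := by
      rw [hτ]; field_simp; ring
    linarith
  have he2 : 1 ≤ e ζ₀ := by
    have h1 := logPot_le hC hμ hS.isBounded hSμ ζ₀ hℓ (b := 0) (by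
      intro w hw
      refine Real.log_nonpos (by positivity) ?_
      rw [div_le_one hℓ, ← dist_eq_norm, dist_comm]
      exact hSℓ w hw)
    refine Real.one_le_exp ?_
    have : τ / ℓ * logPot μ ℓ ζ₀ ≤ 0 := mul_nonpos_of_nonneg_of_nonpos hτ0 (by linarith)
    linarith
  have he3 : ∀ y, 3 * ℓ ≤ dist y ζ₀ → e y ≤ Real.exp (-(N + 1)) := by
    intro y hy
    have h1 : Real.log 2 * m ≤ logPot μ ℓ y := by
      have h3 : ∫ _, Real.log 2 ∂μ ≤ ∫ w, Real.log (‖y - w‖ / ℓ) ∂μ := by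
        refine integral_mono_ae (integrable_const _)
          (integrable_log_norm_sub_div hC hμ hS.isBounded hSμ y hℓ) (hSμ.mono fun w hw => ?_)
        refine Real.log_le_log two_pos ?_
        rw [le_div_iff₀ hℓ, ← dist_eq_norm]
        linarith [dist_triangle y w ζ₀, hSℓ w hw]
      rw [integral_const, smul_eq_mul, mul_comm] at h3
      exact h3
    refine Real.exp_le_exp.2 (neg_le_neg ?_)
    have hlog := Real.log_two_gt_d9
    calc N + 1 ≤ 8 * (N + 1) * (1 / 2 / 4) := by linarith
      _ = τ / ℓ * (1 / 2 * (ℓ / 4)) := by rw [hτ]; field_simp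
      _ ≤ τ / ℓ * (Real.log 2 * m) := by gcongr; linarith
      _ ≤ τ / ℓ * logPot μ ℓ y := by gcongr
  have hUo : IsOpen (ball ζ₀ (4 * ℓ) \ S) := isOpen_ball.sdiff hS.isClosed
  have hζU : ζ₀ ∈ ball ζ₀ (4 * ℓ) \ S := by
    refine ⟨mem_ball_self (by positivity), fun h0 => ?_⟩
    have h1 := hsmall ζ₀ h0
    have h2 : Real.exp (-(16 * C * (N + 1) + 1)) < 1 := by
      rw [Real.exp_lt_one_iff]
      have : 0 ≤ 16 * C * (N + 1) := by positivity
      linarith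
    nlinarith
  have hmain := le_of_locally_norm_analytic hUo (h := fun y => ‖P.eval y‖ * e y)
    (M := Real.exp (-1) * ‖P.eval ζ₀‖) ?_ ?_ ?_ ζ₀ hζU
  · have h1 : Real.exp (-1) < 1 := by rw [Real.exp_lt_one_iff]; norm_num
    have h2 : ‖P.eval ζ₀‖ * 1 ≤ ‖P.eval ζ₀‖ * e ζ₀ := by gcongr
    nlinarith
  · intro y hy
    obtain ⟨F, hF, hFe⟩ := exists_analyticAt_norm_eq_exp_logPot hC hμ hS hSμ hℓ (τ / ℓ) hy.2
    refine ⟨fun x => P.eval x * F x, ((Polynomial.differentiable P).analyticAt y).mul hF, ?_⟩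
    filter_upwards [hFe] with x hx
    simp only [he, norm_mul, hx]
  · intro ζ hζ M' hM'
    have hcl : dist ζ ζ₀ ≤ 4 * ℓ :=
      closure_minimal (sdiff_subset.trans ball_subset_closedBall) isClosed_closedBall
        (frontier_subset_closure hζ)
    have hζU' : ζ ∉ ball ζ₀ (4 * ℓ) \ S := by
      rw [hUo.frontier_eq] at hζ; exact hζ.2
    by_cases hζS : ζ ∈ S
    · have hcont : ContinuousAt (fun y => ‖P.eval y‖ * Real.exp (16 * C * (N + 1))) ζ := by
        have hP : Continuous fun y => P.eval y := P.continuous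
        fun_prop
      have hval : ‖P.eval ζ‖ * Real.exp (16 * C * (N + 1)) < M' := by
        refine lt_of_le_of_lt ?_ hM'
        refine (mul_le_mul_of_nonneg_right (hsmall ζ hζS) (Real.exp_pos _).le).trans (le_of_eq ?_)
        rw [mul_right_comm, ← Real.exp_add]
        ring_nf
      filter_upwards [nhdsWithin_le_nhds (hcont.eventually (gt_mem_nhds hval))] with y hy
      exact lt_of_le_of_lt (mul_le_mul_of_nonneg_left (he1 y) (norm_nonneg _)) hy
    · have hd : 3 * ℓ < dist ζ ζ₀ := by
        by_contra! h3
        exact hζU' ⟨mem_ball.2 (by linarith), hζS⟩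
      have hnear : ∀ᶠ y in 𝓝 ζ, 3 * ℓ < dist y ζ₀ :=
        (continuous_id.dist continuous_const).continuousAt.eventually (lt_mem_nhds hd)
      filter_upwards [nhdsWithin_le_nhds hnear, self_mem_nhdsWithin] with y hy hyU
      refine lt_of_le_of_lt ?_ hM'
      calc ‖P.eval y‖ * e y ≤ (Real.exp N * ‖P.eval ζ₀‖) * Real.exp (-(N + 1)) :=
            mul_le_mul (hup y (ball_subset_closedBall hyU.1)) (he3 y hy.le) (hepos y).le
              (by positivity)
        _ = Real.exp (-1) * ‖P.eval ζ₀‖ := by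
            rw [mul_right_comm, ← Real.exp_add]; ring_nf
  · intro M' hM'
    filter_upwards [(tendsto_dist_right_cobounded_atTop ζ₀).eventually_gt_atTop (4 * ℓ)]
      with y hy hyU
    exact absurd (mem_ball.1 hyU.1) (not_lt.2 hy.le)

namespace IsArcLengthParam

variable {Γ : Set ℂ} {Λ L : ℝ} {γ : ℝ → ℂ}

theorem hausdorffMeasure_small_values_le (h : IsArcLengthParam Γ Λ L γ) (hΛ : 1 ≤ Λ) {Φ : ℂ → ℂ}
    (hΦ : IsExtConformal (unboundedComponent Γ) Φ) {s δ : ℝ} (hs : 0 < s) (hδ : 0 < δ)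
    (hsd : ∀ a ∈ Γ, ∀ b ∈ levelCurve (unboundedComponent Γ) Φ δ, s ≤ dist a b) {n : ℕ}
    {P : Polynomial ℂ} (hP : P.natDegree ≤ n) {a ℓ : ℝ} (hℓs : 4 * s ≤ ℓ) (hℓs' : ℓ ≤ 8 * s)
    (hℓL : ℓ ≤ L) {A : ℕ} (hA : A ≠ 0) {ζ₀ : ℂ} (hζ₀ : ζ₀ ∈ γ '' Icc a (a + ℓ))
    (hPζ : P.eval ζ₀ ≠ 0)
    (hgood : ∀ ξ ∈ Γ, ‖P.eval ξ‖ ≤ ‖P.eval ζ₀‖ * (1 + dist ξ ζ₀ / ℓ) ^ A) {N : ℝ}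
    (hN : N = 128 * δ * n + 4 * A + A * (Real.log 3 + 2 * (4 * Λ))) :
    μH[1] {z ∈ γ '' Icc a (a + ℓ) |
        ‖P.eval z‖ ≤ Real.exp (-(16 * (4 * Λ) * (N + 1) + 1)) * ‖P.eval ζ₀‖} ≤
      ENNReal.ofReal (ℓ / 4) := by
  have hℓ : 0 < ℓ := by linarith
  have hΓ := h.isCompact
  set J := γ '' Icc a (a + ℓ) with hJ
  have hJc : IsCompact J := h.isCompact_image _ _
  have hJΓ : J ⊆ Γ := (h.isSubarc_image _ _).1
  have hJℓ : μH[1] J = ENNReal.ofReal ℓ := by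
    rw [hJ, h.length_eq a (a + ℓ) (by linarith) (by linarith), add_sub_cancel_left]
  have hdiam : ∀ w ∈ J, dist w ζ₀ ≤ ℓ := fun w hw => by
    simpa using h.dist_le_of_mem_image hw hζ₀
  have hlog3 : 0 ≤ Real.log 3 := Real.log_nonneg (by norm_num)
  have hN0 : 0 ≤ N := by rw [hN]; positivity
  have hfive : (5 : ℝ) ^ A ≤ Real.exp (4 * A) := by
    rw [Real.exp_mul, Real.rpow_natCast]
    have := Real.add_one_le_exp (4 : ℝ)
    gcongr
    linarith
  have hgrowth : ∀ {z : ℂ}, dist z ζ₀ ≤ 4 * ℓ →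
      (1 + dist z ζ₀ / ℓ) ^ A ≤ Real.exp (4 * A) := by
    intro z hz
    refine (pow_le_pow_left₀ (by positivity) ?_ A).trans hfive
    have : dist z ζ₀ / ℓ ≤ 4 := by rwa [div_le_iff₀ hℓ]
    linarith
  refine hausdorffMeasure_le_of_small_values hℓ (by positivity) hN0 ?_ (fun w hw => hdiam w hw.1)
    ?_ ?_ hPζ ?_ (fun z hz => hz.2)
  · exact hJc.inter_right (isClosed_le P.continuous.norm continuous_const)
  · exact (measure_mono (sep_subset _ _)).trans_lt (hJℓ ▸ ENNReal.ofReal_lt_top)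
  · intro z r hr
    exact (measure_mono (inter_subset_inter_left _ ((sep_subset _ _).trans hJΓ))).trans
      (h.hausdorffMeasure_inter_ball_le (by linarith) z hr)
  · intro z hz
    have hzd : dist z ζ₀ ≤ 4 * ℓ := hz
    by_cases hzΓ : z ∈ Γ
    · refine (hgood z hzΓ).trans ?_
      rw [mul_comm]
      refine mul_le_mul_of_nonneg_right ((hgrowth hzd).trans (Real.exp_le_exp.2 ?_))
        (norm_nonneg _)
      rw [hN]
      have : 0 ≤ 128 * δ * n := by positivity
      have : 0 ≤ A * (Real.log 3 + 2 * (4 * Λ)) := by positivity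
      linarith
    · have hfin : IsFiniteMeasure ((μH[1] : Measure ℂ).restrict J) :=
        ⟨by rw [Measure.restrict_apply_univ, hJℓ]; exact ENNReal.ofReal_lt_top⟩
      have key := norm_eval_le_of_growth_on hΓ hΦ hP (μ := (μH[1] : Measure ℂ).restrict J)
        (C := 4 * Λ) (by positivity) (fun z r hr => by
          rw [Measure.restrict_apply measurableSet_ball, inter_comm]
          exact (measure_mono (inter_subset_inter_left _ hJΓ)).trans
            (h.hausdorffMeasure_inter_ball_le (by linarith) z hr)) hJc hJΓ
        (ae_restrict_mem hJc.measurableSet) hℓ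
        (by rw [Measure.real, Measure.restrict_apply_univ, hJℓ, ENNReal.toReal_ofReal hℓ.le])
        hdiam hA hgood hzΓ (K := Real.exp (128 * δ)) (Real.one_le_exp (by positivity)) (by
          intro hzΩ
          have h1 := log_norm_extConformal_le hΓ ⟨ζ₀, hJΓ hζ₀⟩ hΦ hs hδ (K := 32) (by norm_num)
            hsd hzΩ ((infDist_le_dist_of_mem (hJΓ hζ₀)).trans (by linarith))
          have h2 : 0 < ‖Φ z‖ := zero_lt_one.trans (hΦ.2.1.mapsTo hzΩ)
          rw [← Real.exp_log h2]
          exact Real.exp_le_exp.2 (by linarith))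
      refine key.trans ?_
      have hexp : Real.exp N = Real.exp (128 * δ) ^ n * Real.exp (4 * A) *
          Real.exp (A * (Real.log 3 + 2 * (4 * Λ))) := by
        rw [hN, Real.exp_add, Real.exp_add, Real.exp_mul, Real.rpow_natCast]
      rw [hexp]
      calc _ ≤ ‖P.eval ζ₀‖ * Real.exp (A * (Real.log 3 + 2 * (4 * Λ))) * Real.exp (4 * A) *
            Real.exp (128 * δ) ^ n := by gcongr; exact hgrowth hzd
        _ = _ := by ring

theorem ofReal_rpow_mul_measure_le (h : IsArcLengthParam Γ Λ L γ) {ν : Measure ℂ} {lam : ℝ}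
    (hν : IsAInftyMeasure Γ ν lam) {E : Set ℂ} (hE : MeasurableSet E) {a ℓ : ℝ} (hℓ : 0 < ℓ)
    (hℓL : ℓ ≤ L) (hEℓ : μH[1] E ≤ ENNReal.ofReal (ℓ / 4)) {P : Polynomial ℂ} {ζ₀ : ℂ} {p T : ℝ}
    (hp : 0 < p)
    (hS : μH[1] {z ∈ γ '' Icc a (a + ℓ) | ‖P.eval z‖ ≤ Real.exp (-T) * ‖P.eval ζ₀‖} ≤
      ENNReal.ofReal (ℓ / 4)) :
    ENNReal.ofReal (‖P.eval ζ₀‖ ^ p) * ν (γ '' Icc a (a + ℓ)) ≤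
      ENNReal.ofReal lam * ENNReal.ofReal (Real.exp (p * T)) *
        ∫⁻ z in γ '' Ico a (a + ℓ) \ E, ENNReal.ofReal (‖P.eval z‖ ^ p) ∂ν := by
  set J := γ '' Icc a (a + ℓ) with hJ
  set I := γ '' Ico a (a + ℓ) with hI
  set S := {z ∈ J | ‖P.eval z‖ ≤ Real.exp (-T) * ‖P.eval ζ₀‖} with hSdef
  have hJℓ : μH[1] J = ENNReal.ofReal ℓ := by
    rw [hJ, h.length_eq a (a + ℓ) (by linarith) (by linarith), add_sub_cancel_left]
  have hSm : MeasurableSet S :=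
    ((h.isCompact_image _ _).inter_right
      (isClosed_le P.continuous.norm continuous_const)).measurableSet
  have hIm : MeasurableSet I := h.measurableSet_image_Ico (by linarith)
  have hIJ : I ⊆ J := image_mono Ico_subset_Icc_self
  set S' := (I \ E) \ S with hS'
  have hS'm : MeasurableSet S' := (hIm.diff hE).diff hSm
  have hcov : J ⊆ ((S' ∪ E) ∪ S) ∪ {γ (a + ℓ)} := by
    rintro _ ⟨t, ht, rfl⟩
    rcases ht.2.lt_or_eq with h1 | h1
    · by_cases h2 : γ t ∈ E
      · exact Or.inl (Or.inl (Or.inr h2))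
      · by_cases h3 : γ t ∈ S
        · exact Or.inl (Or.inr h3)
        · exact Or.inl (Or.inl (Or.inl ⟨⟨⟨t, ⟨ht.1, h1⟩, rfl⟩, h2⟩, h3⟩))
    · exact Or.inr (by rw [h1]; rfl)
  have := Measure.nullSingletonClass_hausdorff ℂ one_pos
  have hhalf : ENNReal.ofReal ℓ = ENNReal.ofReal (ℓ / 2) + ENNReal.ofReal (ℓ / 2) := by
    rw [← ENNReal.ofReal_add (by linarith) (by linarith)]; congr 1; ring
  have hquarter : ENNReal.ofReal (ℓ / 2) = ENNReal.ofReal (ℓ / 4) + ENNReal.ofReal (ℓ / 4) := by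
    rw [← ENNReal.ofReal_add (by linarith) (by linarith)]; congr 1; ring
  have hlarge : ENNReal.ofReal (ℓ / 2) ≤ μH[1] S' := by
    have h1 : ENNReal.ofReal ℓ ≤ μH[1] S' + ENNReal.ofReal (ℓ / 2) := by
      calc ENNReal.ofReal ℓ = μH[1] J := hJℓ.symm
        _ ≤ μH[1] S' + μH[1] E + μH[1] S + μH[1] {γ (a + ℓ)} :=
            (measure_mono hcov).trans ((measure_union_le _ _).trans (add_le_add_left
              ((measure_union_le _ _).trans (add_le_add_left (measure_union_le _ _) _)) _))
        _ ≤ μH[1] S' + ENNReal.ofReal (ℓ / 4) + ENNReal.ofReal (ℓ / 4) + 0 := by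
            rw [measure_singleton]; gcongr
        _ = _ := by rw [hquarter, add_zero, add_assoc]
    rw [hhalf] at h1
    exact (ENNReal.add_le_add_iff_right ENNReal.ofReal_ne_top).1 h1
  have hνJ : ν J ≤ ENNReal.ofReal lam * ν S' := by
    refine hν.2 J S' (h.isSubarc_image _ _) ((sdiff_subset.trans sdiff_subset).trans hIJ) hS'm ?_
    rw [hJℓ, hhalf, ← two_mul]
    gcongr
  have hint : ENNReal.ofReal (‖P.eval ζ₀‖ ^ p) * ν S' ≤ ENNReal.ofReal (Real.exp (p * T)) *
      ∫⁻ z in S', ENNReal.ofReal (‖P.eval z‖ ^ p) ∂ν := by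
    rw [← setLIntegral_const, ← lintegral_const_mul' _ _ ENNReal.ofReal_ne_top]
    refine setLIntegral_mono' hS'm fun z hz => ?_
    rw [← ENNReal.ofReal_mul (Real.exp_pos _).le]
    refine ENNReal.ofReal_le_ofReal ?_
    have h1 : Real.exp (-T) * ‖P.eval ζ₀‖ ≤ ‖P.eval z‖ := by
      by_contra! h2
      exact hz.2 ⟨hIJ hz.1.1, h2.le⟩
    have h2 : ‖P.eval ζ₀‖ ≤ Real.exp T * ‖P.eval z‖ := by
      rw [Real.exp_neg, inv_mul_le_iff₀ (Real.exp_pos _)] at h1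
      exact h1
    refine (Real.rpow_le_rpow (norm_nonneg _) h2 hp.le).trans (le_of_eq ?_)
    rw [Real.mul_rpow (Real.exp_pos _).le (norm_nonneg _), ← Real.exp_mul, mul_comm T]
  calc ENNReal.ofReal (‖P.eval ζ₀‖ ^ p) * ν J
      ≤ ENNReal.ofReal (‖P.eval ζ₀‖ ^ p) * (ENNReal.ofReal lam * ν S') := by gcongr
    _ = ENNReal.ofReal lam * (ENNReal.ofReal (‖P.eval ζ₀‖ ^ p) * ν S') := by ring
    _ ≤ ENNReal.ofReal lam * (ENNReal.ofReal (Real.exp (p * T)) *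
          ∫⁻ z in S', ENNReal.ofReal (‖P.eval z‖ ^ p) ∂ν) := by gcongr
    _ ≤ ENNReal.ofReal lam * (ENNReal.ofReal (Real.exp (p * T)) *
          ∫⁻ z in I \ E, ENNReal.ofReal (‖P.eval z‖ ^ p) ∂ν) := by
        gcongr
        exact sdiff_subset
    _ = _ := by rw [mul_assoc]

theorem lintegral_inv_pow_le (h : IsArcLengthParam Γ Λ L γ) (hΛ : 1 ≤ Λ) {ν : Measure ℂ}
    {lam : ℝ} (hν : IsAInftyMeasure Γ ν lam) {A m : ℕ} (hA : 2 * lam ≤ 2 ^ A)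
    (hm : 2 * Λ + 1 ≤ 2 ^ m) {a ℓ : ℝ} (hℓ : 0 < ℓ) {ζ₀ : ℂ}
    (hζ₀ : ζ₀ ∈ γ '' Icc a (a + ℓ)) :
    ∫⁻ z in Γ, ENNReal.ofReal (1 / (1 + dist z ζ₀ / ℓ) ^ A) ∂ν ≤
      2 ^ A * ENNReal.ofReal lam ^ m * 2 * ν (γ '' Icc a (a + ℓ)) := by
  have hlam : 0 < lam := zero_lt_one.trans_le hν.1
  obtain ⟨t, ht, rfl⟩ := hζ₀
  set J := γ '' Icc a (a + ℓ) with hJ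
  have hball : ∀ i : ℕ, ν (Γ ∩ ball (γ t) (2 ^ i * ℓ)) ≤ ENNReal.ofReal lam ^ (i + m) * ν J := by
    intro i
    have h1 := h.measure_image_two_pow_mul_le hν (a + ℓ / 2) (r := ℓ / 2) (by linarith) (i + m)
    have e1 : a + ℓ / 2 - ℓ / 2 = a := by ring
    have e2 : a + ℓ / 2 + ℓ / 2 = a + ℓ := by ring
    rw [e1, e2] at h1
    refine le_trans (measure_mono ?_) h1
    rintro ξ ⟨hξ, hξd⟩
    have h2 := h.mem_image_of_dist_le (by linarith) hξ (t := t) (r := 2 ^ i * ℓ)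
      (by rw [dist_comm]; exact (mem_ball.1 hξd).le)
    have h3 : (1 : ℝ) ≤ 2 ^ i := one_le_pow₀ one_le_two
    have h4 : Λ * (2 ^ i * ℓ) + ℓ / 2 ≤ 2 ^ (i + m) * (ℓ / 2) := by
      have h5 : 2 ^ i * ℓ * (2 * Λ + 1) ≤ 2 ^ i * ℓ * 2 ^ m :=
        mul_le_mul_of_nonneg_left hm (by positivity)
      have h6 : ℓ ≤ 2 ^ i * ℓ := le_mul_of_one_le_left hℓ.le h3
      rw [pow_add]
      linarith
    exact image_mono (Icc_subset_Icc (by linarith [ht.1, ht.2]) (by linarith [ht.1, ht.2])) h2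
  have hpt : ∀ z, ENNReal.ofReal (1 / (1 + dist z (γ t) / ℓ) ^ A) ≤
      ∑' i : ℕ, (ball (γ t) (2 ^ i * ℓ)).indicator
        (fun _ => (2 : ℝ≥0∞) ^ A * ((2 ^ A)⁻¹) ^ i) z := by
    intro z
    set x := dist z (γ t) / ℓ with hx
    have hx0 : 0 ≤ x := by positivity
    have hex : ∃ i : ℕ, x < 2 ^ i := pow_unbounded_of_one_lt x one_lt_two
    classical
    set i := Nat.find hex with hi
    have hi1 : x < 2 ^ i := Nat.find_spec hex
    refine le_trans ?_ (ENNReal.le_tsum i)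
    have hzb : z ∈ ball (γ t) (2 ^ i * ℓ) := by
      rw [mem_ball]; rwa [hx, div_lt_iff₀ hℓ] at hi1
    rw [indicator_of_mem hzb]
    have hreal : 1 / (1 + x) ^ A ≤ 2 ^ A * ((2 ^ A)⁻¹) ^ i := by
      rcases Nat.eq_zero_or_pos i with h0 | h0
      · rw [h0, pow_zero, mul_one]
        exact (div_le_one_of_le₀ (one_le_pow₀ (by linarith)) (by positivity)).trans
          (one_le_pow₀ one_le_two)
      · obtain ⟨k, hk⟩ := Nat.exists_eq_succ_of_ne_zero h0.ne'
        have h1 : (2 : ℝ) ^ k ≤ x := not_lt.1 (Nat.find_min hex (by omega))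
        have h2 : (2 : ℝ) ^ A * ((2 ^ A)⁻¹) ^ i = 1 / (2 ^ k) ^ A := by
          rw [hk, pow_succ, inv_pow, ← pow_mul, ← pow_mul, mul_comm A k]
          field_simp
        rw [h2]
        gcongr
        linarith
    refine (ENNReal.ofReal_le_ofReal hreal).trans (le_of_eq ?_)
    rw [ENNReal.ofReal_mul (by positivity), ENNReal.ofReal_pow (by positivity),
      ENNReal.ofReal_pow (by positivity), ENNReal.ofReal_inv_of_pos (by positivity),
      ENNReal.ofReal_pow (by positivity), ENNReal.ofReal_ofNat]
  have hratio : (2 ^ A)⁻¹ * ENNReal.ofReal lam ≤ 2⁻¹ := by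
    have h1 : ENNReal.ofReal lam ≤ ENNReal.ofReal (2 ^ A * 2⁻¹) :=
      ENNReal.ofReal_le_ofReal (by linarith)
    rw [ENNReal.ofReal_mul (by positivity), ENNReal.ofReal_pow (by positivity),
      ENNReal.ofReal_inv_of_pos (by positivity), ENNReal.ofReal_ofNat] at h1
    refine (mul_le_mul_right h1 _).trans (le_of_eq ?_)
    rw [← mul_assoc, ENNReal.inv_mul_cancel (by simp) (by simp), one_mul]
  calc ∫⁻ z in Γ, ENNReal.ofReal (1 / (1 + dist z (γ t) / ℓ) ^ A) ∂ν
      ≤ ∫⁻ z in Γ, ∑' i : ℕ, (ball (γ t) (2 ^ i * ℓ)).indicator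
        (fun _ => (2 : ℝ≥0∞) ^ A * ((2 ^ A)⁻¹) ^ i) z ∂ν := lintegral_mono hpt
    _ = ∑' i : ℕ, 2 ^ A * ((2 ^ A)⁻¹) ^ i * ν (Γ ∩ ball (γ t) (2 ^ i * ℓ)) := by
        rw [lintegral_tsum fun i =>
          (measurable_const.indicator measurableSet_ball).aemeasurable]
        refine tsum_congr fun i => ?_
        rw [lintegral_indicator_const measurableSet_ball,
          Measure.restrict_apply measurableSet_ball, inter_comm]
    _ ≤ ∑' i : ℕ, 2 ^ A * ENNReal.ofReal lam ^ m * ν J * 2⁻¹ ^ i := by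
        refine ENNReal.tsum_le_tsum fun i => ?_
        calc 2 ^ A * ((2 ^ A)⁻¹) ^ i * ν (Γ ∩ ball (γ t) (2 ^ i * ℓ))
            ≤ 2 ^ A * ((2 ^ A)⁻¹) ^ i * (ENNReal.ofReal lam ^ (i + m) * ν J) := by
              gcongr; exact hball i
          _ = 2 ^ A * ENNReal.ofReal lam ^ m * ν J * ((2 ^ A)⁻¹ * ENNReal.ofReal lam) ^ i := by
              rw [pow_add, mul_pow]; ring
          _ ≤ _ := by gcongr
    _ = _ := by
        rw [ENNReal.tsum_mul_left, ENNReal.tsum_geometric, ENNReal.one_sub_inv_two, inv_inv]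
        ring

end IsArcLengthParam

/-- Every value of a continuous function on a compact set is dominated by its value at a point
relative to which the function has polynomial growth. -/
theorem exists_growth_point {Γ : Set ℂ} (hΓ : IsCompact Γ) {f : ℂ → ℝ} (hf : Continuous f)
    (hf0 : ∀ z, 0 ≤ f z) {ℓ : ℝ} (hℓ : 0 < ℓ) (A : ℕ) {z : ℂ} (hz : z ∈ Γ) :
    ∃ ζ ∈ Γ, (∀ ξ ∈ Γ, f ξ ≤ f ζ * (1 + dist ξ ζ / ℓ) ^ A) ∧
      f z * (1 + dist z ζ / ℓ) ^ A ≤ f ζ := by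
  have hpos : ∀ x y : ℂ, 0 < 1 + dist x y / ℓ := fun x y => by positivity
  obtain ⟨ζ, hζ, hmax⟩ := hΓ.exists_isMaxOn ⟨z, hz⟩
    (f := fun ζ => f ζ / (1 + dist z ζ / ℓ) ^ A)
    (hf.div (by fun_prop) fun ζ => (pow_pos (hpos z ζ) A).ne').continuousOn
  refine ⟨ζ, hζ, fun ξ hξ => ?_, ?_⟩
  · have h1 : f ξ / (1 + dist z ξ / ℓ) ^ A ≤ f ζ / (1 + dist z ζ / ℓ) ^ A := hmax hξ
    rw [div_le_iff₀ (pow_pos (hpos z ξ) A)] at h1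
    refine h1.trans ?_
    rw [div_mul_eq_mul_div, div_le_iff₀ (pow_pos (hpos z ζ) A), mul_assoc, ← mul_pow]
    refine mul_le_mul_of_nonneg_left (pow_le_pow_left₀ (hpos z ξ).le ?_ A) (hf0 ζ)
    have h2 : dist z ξ / ℓ ≤ dist ξ ζ / ℓ + dist z ζ / ℓ := by
      rw [← add_div]
      have := dist_triangle_right z ξ ζ
      gcongr
      linarith
    have h3 : 0 ≤ dist ξ ζ / ℓ * (dist z ζ / ℓ) := by positivity
    nlinarith
  · have h1 : f z / (1 + dist z z / ℓ) ^ A ≤ f ζ / (1 + dist z ζ / ℓ) ^ A := hmax hz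
    rw [dist_self, zero_div, add_zero, one_pow, div_one, le_div_iff₀ (pow_pos (hpos z ζ) A)] at h1
    exact h1

namespace IsArcLengthParam

variable {Γ : Set ℂ} {Λ L : ℝ} {γ : ℝ → ℂ}

theorem exists_mem_image_Ico_mul (h : IsArcLengthParam Γ Λ L γ) {k : ℕ} {ℓ : ℝ} (hℓ : 0 < ℓ)
    (hk : k * ℓ = L) {ζ : ℂ} (hζ : ζ ∈ Γ) : ∃ j < k, ζ ∈ γ '' Ico (j * ℓ) (j * ℓ + ℓ) := by
  obtain ⟨v, ⟨hv0, hvL⟩, rfl⟩ := h.exists_mem_Ico 0 hζ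
  rw [zero_add, ← hk] at hvL
  have hv : 0 ≤ v / ℓ := div_nonneg hv0 hℓ.le
  have h1 := (le_div_iff₀ hℓ).1 (Nat.floor_le hv)
  have h2 := (div_lt_iff₀ hℓ).1 (Nat.lt_floor_add_one (v / ℓ))
  refine ⟨⌊v / ℓ⌋₊, (Nat.floor_lt hv).2 ((div_lt_iff₀ hℓ).2 hvL), v, ⟨h1, by linarith⟩, rfl⟩

theorem disjoint_image_Ico_mul (h : IsArcLengthParam Γ Λ L γ) {k : ℕ} {ℓ : ℝ} (hℓ : 0 < ℓ)
    (hk : k * ℓ = L) {i j : ℕ} (hi : i < k) (hj : j < k) (hij : i ≠ j) :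
    Disjoint (γ '' Ico (i * ℓ) (i * ℓ + ℓ)) (γ '' Ico (j * ℓ) (j * ℓ + ℓ)) := by
  have hsub : ∀ i < k, Ico ((i : ℝ) * ℓ) (i * ℓ + ℓ) ⊆ Ico 0 (0 + L) := fun i hi x hx => by
    have : ((i : ℝ) + 1) * ℓ ≤ k * ℓ :=
      mul_le_mul_of_nonneg_right (by exact_mod_cast Nat.succ_le_of_lt hi) hℓ.le
    have : (0 : ℝ) ≤ i * ℓ := by positivity
    exact ⟨by linarith [hx.1], by linarith [hx.2]⟩
  wlog hlt : i < j generalizing i j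
  · exact (this hj hi hij.symm (by omega)).symm
  refine Set.disjoint_left.2 ?_
  rintro _ ⟨x, hx, rfl⟩ ⟨y, hy, hyx⟩
  obtain rfl := h.injOn 0 (hsub j hj hy) (hsub i hi hx) hyx
  have : ((i : ℝ) + 1) * ℓ ≤ j * ℓ :=
    mul_le_mul_of_nonneg_right (by exact_mod_cast Nat.succ_le_of_lt hlt) hℓ.le
  linarith [hx.2, hy.1]

end IsArcLengthParam

theorem rpow_le_of_growth_points {x y y' d d' ℓ p : ℝ} {A : ℕ} (hℓ : 0 < ℓ) (hp : 1 ≤ p)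
    (hx : 0 ≤ x) (hy' : 0 ≤ y') (hd : 0 ≤ d) (hd' : 0 ≤ d') (hdd : d' ≤ d + ℓ)
    (hxy : x * (1 + d / ℓ) ^ A ≤ y) (hyy : y ≤ y' * 2 ^ A) :
    x ^ p ≤ ((4 : ℝ) ^ A) ^ p * y' ^ p * (1 / (1 + d' / ℓ) ^ A) := by
  have hD' : 0 < 1 + d' / ℓ := by positivity
  have hD : 1 + d' / ℓ ≤ 2 * (1 + d / ℓ) := by
    have h1 : d' / ℓ ≤ d / ℓ + 1 := by
      rw [div_add_one hℓ.ne']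
      exact div_le_div_of_nonneg_right hdd hℓ.le
    have : 0 ≤ d / ℓ := by positivity
    linarith
  set w := 1 / (1 + d' / ℓ) ^ A with hw
  have hw0 : 0 ≤ w := by positivity
  have hw1 : w ≤ 1 := by
    rw [hw, div_le_one (by positivity)]
    exact one_le_pow₀ (by linarith [show 0 ≤ d' / ℓ by positivity])
  have hxw : x ≤ 4 ^ A * y' * w := by
    rw [hw, mul_one_div, le_div_iff₀ (by positivity)]
    calc x * (1 + d' / ℓ) ^ A ≤ x * (2 * (1 + d / ℓ)) ^ A := by gcongr
      _ = 2 ^ A * (x * (1 + d / ℓ) ^ A) := by rw [mul_pow]; ring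
      _ ≤ 2 ^ A * (y' * 2 ^ A) :=
        mul_le_mul_of_nonneg_left (hxy.trans hyy) (by positivity)
      _ = 4 ^ A * y' := by
        rw [show (4 : ℝ) = 2 * 2 by norm_num, mul_pow]; ring
  calc x ^ p ≤ (4 ^ A * y' * w) ^ p := Real.rpow_le_rpow hx hxw (by linarith)
    _ = ((4 : ℝ) ^ A) ^ p * y' ^ p * w ^ p := by
      rw [Real.mul_rpow (by positivity) hw0, Real.mul_rpow (by positivity) hy']
    _ ≤ ((4 : ℝ) ^ A) ^ p * y' ^ p * w := by
      gcongr
      simpa using Real.rpow_le_rpow_of_exponent_ge' hw0 hw1 zero_le_one hp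

namespace IsArcLengthParam

variable {Γ : Set ℂ} {Λ L : ℝ} {γ : ℝ → ℂ}

theorem lintegral_rpow_le (h : IsArcLengthParam Γ Λ L γ) (hΛ : 1 ≤ Λ) {ν : Measure ℂ}
    {lam : ℝ} (hν : IsAInftyMeasure Γ ν lam) {A m : ℕ} (hA : 2 * lam ≤ 2 ^ A)
    (hm : 2 * Λ + 1 ≤ 2 ^ m) {k : ℕ} {ℓ p : ℝ} (hℓ : 0 < ℓ) (hk : k * ℓ = L) (hp : 1 ≤ p)
    {E : Set ℂ} (hE : MeasurableSet E) {P : Polynomial ℂ} {K : ℝ≥0∞}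
    (hK : ∀ (a : ℝ) (ζ : ℂ), ζ ∈ γ '' Icc a (a + ℓ) →
      (∀ ξ ∈ Γ, ‖P.eval ξ‖ ≤ ‖P.eval ζ‖ * (1 + dist ξ ζ / ℓ) ^ A) →
      ENNReal.ofReal (‖P.eval ζ‖ ^ p) * ν (γ '' Icc a (a + ℓ)) ≤
        K * ∫⁻ z in γ '' Ico a (a + ℓ) \ E, ENNReal.ofReal (‖P.eval z‖ ^ p) ∂ν) :
    ∫⁻ z in Γ, ENNReal.ofReal (‖P.eval z‖ ^ p) ∂ν ≤
      ENNReal.ofReal (((4 : ℝ) ^ A) ^ p) * (2 ^ A * ENNReal.ofReal lam ^ m * 2) * K *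
        ∫⁻ z in Γ \ E, ENNReal.ofReal (‖P.eval z‖ ^ p) ∂ν := by
  classical
  let good : ℂ → Prop := fun ζ =>
    ∀ ξ ∈ Γ, ‖P.eval ξ‖ ≤ ‖P.eval ζ‖ * (1 + dist ξ ζ / ℓ) ^ A
  let I : ℕ → Set ℂ := fun j => γ '' Ico (j * ℓ) (j * ℓ + ℓ)
  let J : ℕ → Set ℂ := fun j => γ '' Icc (j * ℓ) (j * ℓ + ℓ)
  have hIJ : ∀ j, I j ⊆ J j := fun j => image_mono Ico_subset_Icc_self
  let G := (Finset.range k).filter fun j => ∃ ζ ∈ I j, good ζ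
  have hex : ∀ j, ∃ ζ, j ∈ G → ζ ∈ I j ∧ good ζ := fun j => by
    by_cases hj : j ∈ G
    · obtain ⟨ζ, hζ⟩ := (Finset.mem_filter.1 hj).2
      exact ⟨ζ, fun _ => hζ⟩
    · exact ⟨0, fun hj' => absurd hj' hj⟩
  choose ζ hζ using hex
  have hcont : Continuous fun z => ‖P.eval z‖ := P.continuous.norm
  let w : ℕ → ℂ → ℝ≥0∞ := fun j z => ENNReal.ofReal (1 / (1 + dist z (ζ j) / ℓ) ^ A)
  have hwm : ∀ j, Measurable (w j) := fun j => by
    refine ENNReal.measurable_ofReal.comp (Continuous.measurable ?_)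
    refine continuous_const.div (by fun_prop) fun z => ?_
    positivity
  let B : ℝ≥0∞ := ENNReal.ofReal (((4 : ℝ) ^ A) ^ p)
  let D : ℝ≥0∞ := 2 ^ A * ENNReal.ofReal lam ^ m * 2
  let Y : ℕ → ℝ≥0∞ := fun j => ENNReal.ofReal (‖P.eval (ζ j)‖ ^ p)
  have hpt : ∀ z ∈ Γ, ENNReal.ofReal (‖P.eval z‖ ^ p) ≤ ∑ j ∈ G, B * Y j * w j z := by
    intro z hz
    obtain ⟨η, hη, hηg, hzη⟩ :=
      exists_growth_point h.isCompact hcont (fun _ => norm_nonneg _) hℓ A hz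
    obtain ⟨j, hj, hηj⟩ := h.exists_mem_image_Ico_mul hℓ hk hη
    have hjG : j ∈ G := Finset.mem_filter.2 ⟨Finset.mem_range.2 hj, η, hηj, hηg⟩
    obtain ⟨hζj, hζg⟩ := hζ j hjG
    have hd : dist η (ζ j) ≤ ℓ := by
      simpa using h.dist_le_of_mem_image (hIJ j hηj) (hIJ j hζj)
    have hd1 : dist η (ζ j) / ℓ ≤ 1 := (div_le_one hℓ).2 hd
    refine le_trans ?_ (Finset.single_le_sum (f := fun j => B * Y j * w j z)
      (fun _ _ => zero_le) hjG)
    change _ ≤ ENNReal.ofReal _ * ENNReal.ofReal _ * ENNReal.ofReal _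
    rw [← ENNReal.ofReal_mul (by positivity), ← ENNReal.ofReal_mul (by positivity)]
    refine ENNReal.ofReal_le_ofReal (rpow_le_of_growth_points (d := dist z η) hℓ hp
      (norm_nonneg _) (norm_nonneg _) dist_nonneg dist_nonneg
      ((dist_triangle _ η _).trans (by gcongr)) hzη ((hζg η hη).trans ?_))
    gcongr
    linarith
  have hterm : ∀ j ∈ G, ∫⁻ z in Γ, B * Y j * w j z ∂ν ≤
      B * D * K * ∫⁻ z in I j \ E, ENNReal.ofReal (‖P.eval z‖ ^ p) ∂ν := fun j hj => by
    obtain ⟨hζj, hζg⟩ := hζ j hj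
    rw [lintegral_const_mul _ (hwm j)]
    calc B * Y j * ∫⁻ z in Γ, w j z ∂ν ≤ B * Y j * (D * ν (J j)) := by
          gcongr
          exact h.lintegral_inv_pow_le hΛ hν hA hm hℓ (hIJ j hζj)
      _ = B * D * (Y j * ν (J j)) := by ring
      _ ≤ B * D * (K * ∫⁻ z in I j \ E, ENNReal.ofReal (‖P.eval z‖ ^ p) ∂ν) :=
          mul_le_mul' le_rfl (hK _ _ (hIJ j hζj) hζg)
      _ = _ := by ring
  have hkℓ : ℓ ≤ L ∨ k = 0 := by
    rcases k.eq_zero_or_pos with hk0 | hk0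
    · exact Or.inr hk0
    · have : (1 : ℝ) ≤ k := by exact_mod_cast hk0
      exact Or.inl (by nlinarith)
  calc ∫⁻ z in Γ, ENNReal.ofReal (‖P.eval z‖ ^ p) ∂ν
      ≤ ∫⁻ z in Γ, ∑ j ∈ G, B * Y j * w j z ∂ν :=
        setLIntegral_mono' h.isCompact.measurableSet hpt
    _ = ∑ j ∈ G, ∫⁻ z in Γ, B * Y j * w j z ∂ν :=
        lintegral_finsetSum _ fun j _ => (hwm j).const_mul _
    _ ≤ ∑ j ∈ G, B * D * K * ∫⁻ z in I j \ E, ENNReal.ofReal (‖P.eval z‖ ^ p) ∂ν :=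
        Finset.sum_le_sum hterm
    _ = B * D * K * ∑ j ∈ G, ∫⁻ z in I j \ E, ENNReal.ofReal (‖P.eval z‖ ^ p) ∂ν :=
        (Finset.mul_sum _ _ _).symm
    _ = B * D * K * ∫⁻ z in ⋃ j ∈ G, I j \ E, ENNReal.ofReal (‖P.eval z‖ ^ p) ∂ν := by
        rw [lintegral_biUnion_finset]
        · intro i hi j hj hij
          have hi' := Finset.mem_range.1 (Finset.mem_filter.1 hi).1
          have hj' := Finset.mem_range.1 (Finset.mem_filter.1 hj).1
          exact (h.disjoint_image_Ico_mul hℓ hk hi' hj' hij).mono sdiff_subset sdiff_subset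
        · intro j hj
          have hj' := Finset.mem_range.1 (Finset.mem_filter.1 hj).1
          refine (h.measurableSet_image_Ico ?_).diff hE
          rcases hkℓ with hkℓ | hkℓ
          · linarith
          · omega
    _ ≤ B * D * K * ∫⁻ z in Γ \ E, ENNReal.ofReal (‖P.eval z‖ ^ p) ∂ν := by
        gcongr
        refine iUnion₂_subset fun j _ => sdiff_subset_sdiff_left ?_
        rintro _ ⟨t, -, rfl⟩
        exact h.mem t

end IsArcLengthParam

theorem le_dist_of_setDist_eq {A B : Set ℂ} {s : ℝ} (hs : setDist A B = s) {a b : ℂ} (ha : a ∈ A)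
    (hb : b ∈ B) : s ≤ dist a b := by
  rw [← hs]
  refine csInf_le ⟨0, ?_⟩ (mem_image2_of_mem ha hb)
  rintro _ ⟨x, -, y, -, rfl⟩
  exact dist_nonneg

theorem exists_nat_mul_eq {L s : ℝ} (hs : 0 < s) (hL : 12 * s < L) :
    ∃ (k : ℕ) (ℓ : ℝ), k * ℓ = L ∧ 4 * s ≤ ℓ ∧ ℓ ≤ 8 * s ∧ ℓ ≤ L := by
  have h4 : 0 < 4 * s := by linarith
  have hr : 1 ≤ L / (4 * s) := (one_le_div h4).2 (by linarith)
  have hk : 1 ≤ ⌊L / (4 * s)⌋₊ := Nat.one_le_floor_iff _ |>.2 hr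
  set k := ⌊L / (4 * s)⌋₊
  have hk' : (1 : ℝ) ≤ k := by exact_mod_cast hk
  have hk0 : (0 : ℝ) < k := by linarith
  have h1 := (le_div_iff₀ h4).1 (Nat.floor_le (zero_le_one.trans hr))
  have h2 := (div_lt_iff₀ h4).1 (Nat.lt_floor_add_one (L / (4 * s)))
  refine ⟨k, L / k, mul_div_cancel₀ _ hk0.ne', ?_, ?_, ?_⟩
  · rw [le_div_iff₀ hk0]
    linarith
  · rw [div_le_iff₀ hk0]
    nlinarith
  · exact div_le_self (by linarith) hk'

theorem setIntegral_le_mul_of_lintegral_le {ν : Measure ℂ} [IsFiniteMeasure ν] {Γ F : Set ℂ}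
    (hΓ : IsCompact Γ) (hF : F ⊆ Γ) {f : ℂ → ℝ} (hf : Continuous f)
    (hf0 : ∀ z, 0 ≤ f z) {C : ℝ} (hC : 0 ≤ C)
    (h : ∫⁻ z in Γ, ENNReal.ofReal (f z) ∂ν ≤
      ENNReal.ofReal C * ∫⁻ z in F, ENNReal.ofReal (f z) ∂ν) :
    ∫ z in Γ, f z ∂ν ≤ C * ∫ z in F, f z ∂ν := by
  have hint : IntegrableOn f F ν := (hf.continuousOn.integrableOn_compact hΓ).mono_set hF
  rw [← ofReal_integral_eq_lintegral_ofReal (hf.continuousOn.integrableOn_compact hΓ)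
      (Eventually.of_forall hf0), ← ofReal_integral_eq_lintegral_ofReal hint
      (Eventually.of_forall hf0), ← ENNReal.ofReal_mul hC] at h
  exact (ENNReal.ofReal_le_ofReal_iff
    (mul_nonneg hC (integral_nonneg hf0))).1 h

/-- weighted Remez-type inequality, Theorem 1:
for a quasismooth Jordan curve `Γ`, `ν ∈ A∞(Γ)` and `1 ≤ p < ∞`, there exist `c₁, c₂ > 0`
depending only on `Γ`, `λ_ν` and `p` such that for every `n`, every `p_n ∈ ℙ_n`, every Borel
set `E ⊆ Γ` and every `s` with `0 < |E| ≤ s < (diam Γ)/12`,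
`∫_Γ |p_n|^p dν ≤ c₁ exp(c₂ δ(s) n) ∫_{Γ∖E} |p_n|^p dν`. -/
theorem weighted_remez_inequality
    (Γ : Set ℂ) (Λ : ℝ) (hΓJ : IsJordanCurve Γ) (hΓq : IsQuasismooth Γ Λ)
    (lam : ℝ) (p : ℝ) (hp : 1 ≤ p)
    (Φ : ℂ → ℂ) (hΦ : IsExtConformal (unboundedComponent Γ) Φ) :
    ∃ c₁ > (0:ℝ), ∃ c₂ > (0:ℝ),
      ∀ ν : MeasureTheory.Measure ℂ, IsFiniteMeasure ν →
        IsAInftyMeasure Γ ν lam → ν Γᶜ = 0 →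
      ∀ (n : ℕ) (P : Polynomial ℂ) (E : Set ℂ) (s δs : ℝ),
        P.natDegree ≤ n → E ⊆ Γ → MeasurableSet E →
        0 < μH[1] E → μH[1] E ≤ ENNReal.ofReal s → s < Metric.diam Γ / 12 →
        0 < δs → setDist Γ (levelCurve (unboundedComponent Γ) Φ δs) = s →
        ∫ z in Γ, ‖P.eval z‖ ^ p ∂ν ≤
          c₁ * Real.exp (c₂ * δs * n) * ∫ z in Γ \ E, ‖P.eval z‖ ^ p ∂ν := by
  by_cases hlam : 1 ≤ lam
  swap
  · exact ⟨1, one_pos, 1, one_pos, fun ν _ hν => absurd hν.1 hlam⟩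
  have hΛ := hΓq.1
  obtain ⟨L, γ, h⟩ := hΓJ.exists_isArcLengthParam hΓq
  obtain ⟨A, hA⟩ := pow_unbounded_of_one_lt (2 * lam) one_lt_two
  obtain ⟨m, hm⟩ := pow_unbounded_of_one_lt (2 * Λ + 1) one_lt_two
  have hA0 : A ≠ 0 := by
    rintro rfl
    rw [pow_zero] at hA
    linarith
  set N₀ : ℝ := 4 * A + A * (Real.log 3 + 2 * (4 * Λ)) with hN₀
  refine ⟨((4 : ℝ) ^ A) ^ p * (2 ^ A * lam ^ m * 2) *
    (lam * Real.exp (p * (16 * (4 * Λ) * (N₀ + 1) + 1))), by positivity,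
    p * (16 * (4 * Λ) * 128), by positivity, ?_⟩
  intro ν hνfin hν _ n P E s δ hP hEΓ hE hE0 hEs hsd hδ hsδ
  have hs : 0 < s := ENNReal.ofReal_pos.1 (hE0.trans_le hEs)
  obtain ⟨k, ℓ, hk, hℓs, hℓs', hℓL⟩ := exists_nat_mul_eq hs (by linarith [h.diam_le] : 12 * s < L)
  have hℓ : 0 < ℓ := by linarith
  have hEℓ : μH[1] E ≤ ENNReal.ofReal (ℓ / 4) :=
    hEs.trans (ENNReal.ofReal_le_ofReal (by linarith))
  have hp0 : 0 < p := by linarith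
  have hcont : Continuous fun z => ‖P.eval z‖ ^ p :=
    P.continuous.norm.rpow_const fun _ => Or.inr hp0.le
  set N : ℝ := 128 * δ * n + 4 * A + A * (Real.log 3 + 2 * (4 * Λ)) with hN
  set T : ℝ := 16 * (4 * Λ) * (N + 1) + 1 with hT
  refine setIntegral_le_mul_of_lintegral_le h.isCompact sdiff_subset hcont
    (fun z => by positivity) (by positivity) ?_
  refine (h.lintegral_rpow_le hΛ hν hA.le hm.le hℓ hk hp hE (P := P)
    (K := ENNReal.ofReal lam * ENNReal.ofReal (Real.exp (p * T))) ?_).trans_eq ?_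
  · intro a ζ hζ hgood
    by_cases hPζ : P.eval ζ = 0
    · simp [hPζ, Real.zero_rpow hp0.ne']
    · exact h.ofReal_rpow_mul_measure_le hν hE hℓ hℓL hEℓ hp0
        (h.hausdorffMeasure_small_values_le hΛ hΦ hs hδ
          (fun a ha b hb => le_dist_of_setDist_eq hsδ ha hb) hP hℓs hℓs' hℓL hA0 hζ hPζ hgood hN)
  · congr 1
    have hexp : Real.exp (p * T) = Real.exp (p * (16 * (4 * Λ) * (N₀ + 1) + 1)) *
        Real.exp (p * (16 * (4 * Λ) * 128) * δ * n) := by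
      rw [← Real.exp_add, hT, hN, hN₀]
      congr 1
      ring
    have h2 : (2 : ℝ≥0∞) = ENNReal.ofReal 2 := by simp
    rw [hexp, h2, ← ENNReal.ofReal_pow zero_le_two, ← ENNReal.ofReal_pow (by positivity),
      ← ENNReal.ofReal_mul (by positivity), ← ENNReal.ofReal_mul (by positivity),
      ← ENNReal.ofReal_mul (by positivity), ← ENNReal.ofReal_mul (by positivity),
      ← ENNReal.ofReal_mul (by positivity)]
    congr 1
    ring
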